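/- arXiv:2104.14686 — 2 statements merged into one kernel-verified Lean document; each statement's English description precedes it below -/
import Mathlib

section
/- If m → G ← n and n → H ← p are monogamous acyclic cospans of hypergraphs with discrete interfaces, then their composite cospan m → G+_n H ← p (obtained by pushout, i.e. by gluing G and H along the common interface n) is monogamous and acyclic. -/
namespace SDRT

/-- A directed hypergraph: a set of nodes and, for each hyperedge, an ordered
list of source nodes and an ordered list of target nodes.  A `(k,l)`-hyperedge
is a hyperedge with `k` sources and `l` targets. -/
structure Hyp : Type 1 where
  V : Type
  E : Type
  src : E → List V
  tgt : E → List V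

namespace Hyp

/-- The set of pairs `(h, i)` such that `v` is the `i`-th target of the hyperedge `h`.
The in-degree of `v` is the number of such pairs. -/
def inPairs (G : Hyp) (v : G.V) : Set (G.E × ℕ) := {p | (G.tgt p.1)[p.2]? = some v}

/-- The set of pairs `(h, j)` such that `v` is the `j`-th source of the hyperedge `h`.
The out-degree of `v` is the number of such pairs. -/
def outPairs (G : Hyp) (v : G.V) : Set (G.E × ℕ) := {p | (G.src p.1)[p.2]? = some v}

/-- `v` has in-degree `0`. -/
def inDegZero (G : Hyp) (v : G.V) : Prop := G.inPairs v = ∅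

/-- `v` has in-degree `1`. -/
def inDegOne (G : Hyp) (v : G.V) : Prop := ∃! p, p ∈ G.inPairs v

/-- `v` has out-degree `0`. -/
def outDegZero (G : Hyp) (v : G.V) : Prop := G.outPairs v = ∅

/-- `v` has out-degree `1`. -/
def outDegOne (G : Hyp) (v : G.V) : Prop := ∃! p, p ∈ G.outPairs v

/-- `h'` is a successor of `h` if some node is both a target of `h` and a source of `h'`. -/
def Successor (G : Hyp) (h h' : G.E) : Prop := ∃ v, v ∈ G.tgt h ∧ v ∈ G.src h'

/-- `l` is a path (nonempty sequence of hyperedges, each a successor of the previous)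
from the node `v` to the node `v'`: `v` is among the sources of the first hyperedge
and `v'` among the targets of the last one. -/
def PathFrom (G : Hyp) (l : List G.E) (v v' : G.V) : Prop :=
  ∃ hne : l ≠ [], l.Chain' G.Successor ∧ v ∈ G.src (l.head hne) ∧ v' ∈ G.tgt (l.getLast hne)

/-- `l` is a path from the hyperedge `h` to the hyperedge `h'`. -/
def EdgePath (G : Hyp) (l : List G.E) (h h' : G.E) : Prop :=
  ∃ hne : l ≠ [], l.Chain' G.Successor ∧ l.head hne = h ∧ l.getLast hne = h'

/-- A hypergraph is acyclic if there is no path from a node to itself. -/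
def Acyclic (G : Hyp) : Prop := ∀ (v : G.V) (l : List G.E), ¬ G.PathFrom l v v

end Hyp

/-- A subhypergraph: a set of nodes and hyperedges closed under taking the sources
and targets of its hyperedges. -/
structure SubHyp (G : Hyp) where
  nodes : Set G.V
  edges : Set G.E
  src_mem : ∀ e ∈ edges, ∀ v ∈ G.src e, v ∈ nodes
  tgt_mem : ∀ e ∈ edges, ∀ v ∈ G.tgt e, v ∈ nodes

/-- A subhypergraph `H` of `G` is convex if every path in `G` between nodes of `H`
consists only of hyperedges of `H`. -/
def SubHyp.Convex {G : Hyp} (H : SubHyp G) : Prop :=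
  ∀ v ∈ H.nodes, ∀ v' ∈ H.nodes, ∀ l, G.PathFrom l v v' → ∀ e ∈ l, e ∈ H.edges

/-- The hypergraph underlying a subhypergraph. -/
def SubHyp.toHyp {G : Hyp} (H : SubHyp G) : Hyp where
  V := H.nodes
  E := H.edges
  src := fun e => (G.src e.1).pmap (fun v hv => (⟨v, hv⟩ : H.nodes))
    (fun v hv => H.src_mem e.1 e.2 v hv)
  tgt := fun e => (G.tgt e.1).pmap (fun v hv => (⟨v, hv⟩ : H.nodes))
    (fun v hv => H.tgt_mem e.1 e.2 v hv)

/-- A cospan of hypergraphs with discrete interfaces `m → G ← n`. -/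
structure Cospan (m n : Type) : Type 1 where
  G : Hyp
  inp : m → G.V
  out : n → G.V

namespace Cospan

/-- A cospan is monogamous if both legs are injective, nodes in the image of the
input leg have in-degree 0, all other nodes have in-degree 1, nodes in the image
of the output leg have out-degree 0, and all other nodes have out-degree 1. -/
def Monogamous {m n : Type} (A : Cospan m n) : Prop :=
  Function.Injective A.inp ∧ Function.Injective A.out ∧
  (∀ v ∈ Set.range A.inp, A.G.inDegZero v) ∧
  (∀ v ∉ Set.range A.inp, A.G.inDegOne v) ∧
  (∀ v ∈ Set.range A.out, A.G.outDegZero v) ∧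
  (∀ v ∉ Set.range A.out, A.G.outDegOne v)

/-- A cospan is acyclic if its carrier is. -/
def Acyclic {m n : Type} (A : Cospan m n) : Prop := A.G.Acyclic

/-- Composition of cospans by pushout: glue `G` and `H` along the common
interface `n`, identifying `A.out k` with `B.inp k` for every `k : n`. -/
def comp {m n p : Type} (A : Cospan m n) (B : Cospan n p) : Cospan m p where
  G := { V := Quot (fun x y : A.G.V ⊕ B.G.V =>
                      ∃ k : n, x = Sum.inl (A.out k) ∧ y = Sum.inr (B.inp k))
         E := A.G.E ⊕ B.G.E
         src := Sum.elim (fun e => (A.G.src e).map (fun v => Quot.mk _ (Sum.inl v)))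
                         (fun e => (B.G.src e).map (fun v => Quot.mk _ (Sum.inr v)))
         tgt := Sum.elim (fun e => (A.G.tgt e).map (fun v => Quot.mk _ (Sum.inl v)))
                         (fun e => (B.G.tgt e).map (fun v => Quot.mk _ (Sum.inr v))) }
  inp := fun x => Quot.mk _ (Sum.inl (A.inp x))
  out := fun y => Quot.mk _ (Sum.inr (B.out y))

/-- Monoidal product (tensor) of cospans: disjoint union of the carriers, with
the evident interface maps. -/
def tensor {m₁ n₁ m₂ n₂ : Type} (A : Cospan m₁ n₁) (B : Cospan m₂ n₂) :
    Cospan (m₁ ⊕ m₂) (n₁ ⊕ n₂) where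
  G := { V := A.G.V ⊕ B.G.V
         E := A.G.E ⊕ B.G.E
         src := Sum.elim (fun e => (A.G.src e).map Sum.inl) (fun e => (B.G.src e).map Sum.inr)
         tgt := Sum.elim (fun e => (A.G.tgt e).map Sum.inl) (fun e => (B.G.tgt e).map Sum.inr) }
  inp := Sum.elim (fun x => Sum.inl (A.inp x)) (fun x => Sum.inr (B.inp x))
  out := Sum.elim (fun y => Sum.inl (A.out y)) (fun y => Sum.inr (B.out y))

/-- The identity cospan on `k`: the discrete hypergraph on `k` with identity legs. -/
def idCospan (k : Type) : Cospan k k where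
  G := { V := k, E := Empty, src := Empty.elim, tgt := Empty.elim }
  inp := id
  out := id

end Cospan

/-- An isomorphism of cospans: a hypergraph isomorphism of the carriers commuting
with the interface legs. -/
structure CospanIso {m n : Type} (A B : Cospan m n) where
  nodeEquiv : A.G.V ≃ B.G.V
  edgeEquiv : A.G.E ≃ B.G.E
  src_eq : ∀ e, B.G.src (edgeEquiv e) = (A.G.src e).map nodeEquiv
  tgt_eq : ∀ e, B.G.tgt (edgeEquiv e) = (A.G.tgt e).map nodeEquiv
  inp_eq : ∀ x, nodeEquiv (A.inp x) = B.inp x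
  out_eq : ∀ y, nodeEquiv (A.out y) = B.out y

/-- Two cospans are isomorphic if there is an isomorphism between them. -/
def Cospan.Isomorphic {m n : Type} (A B : Cospan m n) : Prop := Nonempty (CospanIso A B)

/-- A homomorphism of hypergraphs: maps nodes to nodes and hyperedges to
hyperedges, preserving the ordered lists of sources and targets. -/
structure HypHom (G H : Hyp) where
  nodeMap : G.V → H.V
  edgeMap : G.E → H.E
  src_eq : ∀ e, H.src (edgeMap e) = (G.src e).map nodeMap
  tgt_eq : ∀ e, H.tgt (edgeMap e) = (G.tgt e).map nodeMap

/-- The image of a hypergraph homomorphism, as a subhypergraph of the codomain. -/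
def HypHom.image {G H : Hyp} (f : HypHom G H) : SubHyp H where
  nodes := Set.range f.nodeMap
  edges := Set.range f.edgeMap
  src_mem := by
    rintro e ⟨e', rfl⟩ v hv
    rw [f.src_eq] at hv
    rcases List.mem_map.mp hv with ⟨w, -, rfl⟩
    exact ⟨w, rfl⟩
  tgt_mem := by
    rintro e ⟨e', rfl⟩ v hv
    rw [f.tgt_eq] at hv
    rcases List.mem_map.mp hv with ⟨w, -, rfl⟩
    exact ⟨w, rfl⟩

/-!
Reversing hyperedges turns the gluing of `A` and `B` into the gluing of the reversals of `B` and
`A`, so monogamy need only be checked for input legs and in-degrees.  A glued node is an input of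
`B`, hence not the target of any hyperedge of `B`; each node of the composite therefore receives
its incoming hyperedges from one side only.  For the same reason no hyperedge of `B` is followed by
one of `A`: the hyperedges of `B` are closed under successors, so a closed path of the composite
stays on one side, where acyclicity excludes it.
-/

namespace Hyp

/-- The hypergraph with all hyperedges reversed.  It exchanges in-degrees and out-degrees, so that
a fact about one of them yields the dual fact about the other. -/
def op (G : Hyp) : Hyp where
  V := G.V
  E := G.E
  src := G.tgt
  tgt := G.src

variable {G : Hyp}

theorem inDegZero_iff_forall_notMem_tgt {v : G.V} : G.inDegZero v ↔ ∀ e, v ∉ G.tgt e := by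
  simp only [inDegZero, inPairs, Set.eq_empty_iff_forall_notMem, Set.mem_ofPred_eq, Prod.forall,
    List.mem_iff_getElem?, not_exists]

theorem inDegOne_iff_exists_inPairs_eq_singleton {v : G.V} :
    G.inDegOne v ↔ ∃ p, G.inPairs v = {p} := by
  simp only [inDegOne, ExistsUnique, Set.eq_singleton_iff_unique_mem]

theorem PathFrom.forall_mem_or_forall_notMem_of_closed {S : Set G.E} {l : List G.E} {v : G.V}
    (hl : G.PathFrom l v v) (hS : ∀ ⦃h h'⦄, G.Successor h h' → h ∈ S → h' ∈ S) :
    (∀ h ∈ l, h ∈ S) ∨ ∀ h ∈ l, h ∉ S := by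
  obtain ⟨hne, hchain, hsrc, htgt⟩ := hl
  by_cases hlast : l.getLast hne ∈ S
  · have hhead : l.head hne ∈ S := hS ⟨v, htgt, hsrc⟩ hlast
    exact .inl (hchain.induction (· ∈ S) l hS fun _ => hhead)
  · exact .inr (hchain.backwards_induction (· ∉ S) l (fun _ _ hs => mt (hS hs)) fun _ => hlast)

end Hyp

namespace HypHom

variable {G H : Hyp} (f : HypHom G H)

/-- The homomorphism between the reversed hypergraphs with the same underlying maps. -/
def op : HypHom G.op H.op where
  nodeMap := f.nodeMap
  edgeMap := f.edgeMap
  src_eq := f.tgt_eq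
  tgt_eq := f.src_eq

theorem nodeMap_mem_tgt_iff (hf : Function.Injective f.nodeMap) {v : G.V} {e : G.E} :
    f.nodeMap v ∈ H.tgt (f.edgeMap e) ↔ v ∈ G.tgt e := by
  rw [f.tgt_eq, List.mem_map_of_injective hf]

theorem nodeMap_mem_src_iff (hf : Function.Injective f.nodeMap) {v : G.V} {e : G.E} :
    f.nodeMap v ∈ H.src (f.edgeMap e) ↔ v ∈ G.src e :=
  f.op.nodeMap_mem_tgt_iff hf

theorem exists_nodeMap_eq_of_mem_tgt {x : H.V} {e : G.E} (hx : x ∈ H.tgt (f.edgeMap e)) :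
    ∃ v ∈ G.tgt e, f.nodeMap v = x := by
  rwa [f.tgt_eq, List.mem_map] at hx

theorem exists_nodeMap_eq_of_mem_src {x : H.V} {e : G.E} (hx : x ∈ H.src (f.edgeMap e)) :
    ∃ v ∈ G.src e, f.nodeMap v = x :=
  f.op.exists_nodeMap_eq_of_mem_tgt hx

theorem successor_edgeMap_iff (hf : Function.Injective f.nodeMap) {h h' : G.E} :
    H.Successor (f.edgeMap h) (f.edgeMap h') ↔ G.Successor h h' := by
  constructor
  · rintro ⟨x, hx, hx'⟩
    obtain ⟨v, hv, rfl⟩ := f.exists_nodeMap_eq_of_mem_tgt hx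
    exact ⟨v, hv, (f.nodeMap_mem_src_iff hf).1 hx'⟩
  · rintro ⟨v, hv, hv'⟩
    exact ⟨f.nodeMap v, (f.nodeMap_mem_tgt_iff hf).2 hv, (f.nodeMap_mem_src_iff hf).2 hv'⟩

theorem pathFrom_map_iff (hf : Function.Injective f.nodeMap) {l : List G.E} {v v' : G.V} :
    H.PathFrom (l.map f.edgeMap) (f.nodeMap v) (f.nodeMap v') ↔ G.PathFrom l v v' := by
  have chain_iff : (l.map f.edgeMap).IsChain H.Successor ↔ l.IsChain G.Successor := by
    simp only [List.isChain_map, f.successor_edgeMap_iff hf]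
  simp only [Hyp.PathFrom, ne_eq, List.map_eq_nil_iff, List.head_map, List.getLast_map,
    f.nodeMap_mem_src_iff hf, f.nodeMap_mem_tgt_iff hf]
  exact exists_congr fun _ => and_congr_left fun _ => chain_iff

theorem not_pathFrom_of_acyclic (hf : Function.Injective f.nodeMap) (hG : G.Acyclic)
    {l : List H.E} (hl : ∀ h ∈ l, h ∈ Set.range f.edgeMap) (x : H.V) : ¬ H.PathFrom l x x := by
  intro hpath
  obtain ⟨l, rfl⟩ : l ∈ Set.range (List.map f.edgeMap) := by rwa [Set.range_list_map]
  obtain ⟨hne, -, hsrc, -⟩ := id hpath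
  rw [List.head_map] at hsrc
  obtain ⟨v, -, rfl⟩ := f.exists_nodeMap_eq_of_mem_src hsrc
  exact hG v l ((f.pathFrom_map_iff hf).1 hpath)

section InDegree

variable {f} {v : G.V}

theorem inPairs_nodeMap (hf : Function.Injective f.nodeMap)
    (hv : ∀ h, f.nodeMap v ∈ H.tgt h → h ∈ Set.range f.edgeMap) :
    H.inPairs (f.nodeMap v) = Prod.map f.edgeMap id '' G.inPairs v := by
  have mem_iff (e : G.E) (i : ℕ) :
      (f.edgeMap e, i) ∈ H.inPairs (f.nodeMap v) ↔ (e, i) ∈ G.inPairs v := by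
    simp [Hyp.inPairs, f.tgt_eq, hf.eq_iff]
  ext ⟨h, i⟩
  constructor
  · intro hp
    obtain ⟨e, rfl⟩ := hv h (List.mem_of_getElem? hp)
    exact ⟨(e, i), (mem_iff e i).1 hp, rfl⟩
  · rintro ⟨⟨e, j⟩, he, heq⟩
    exact heq ▸ (mem_iff e j).2 he

theorem inDegZero_nodeMap (hf : Function.Injective f.nodeMap)
    (hv : ∀ h, f.nodeMap v ∈ H.tgt h → h ∈ Set.range f.edgeMap) (h0 : G.inDegZero v) :
    H.inDegZero (f.nodeMap v) :=
  (inPairs_nodeMap hf hv).trans (Set.image_eq_empty.2 h0)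

theorem inDegOne_nodeMap (hf : Function.Injective f.nodeMap)
    (hv : ∀ h, f.nodeMap v ∈ H.tgt h → h ∈ Set.range f.edgeMap) (h1 : G.inDegOne v) :
    H.inDegOne (f.nodeMap v) := by
  rw [Hyp.inDegOne_iff_exists_inPairs_eq_singleton] at h1 ⊢
  obtain ⟨p, hp⟩ := h1
  exact ⟨Prod.map f.edgeMap id p, by rw [inPairs_nodeMap hf hv, hp, Set.image_singleton]⟩

end InDegree

end HypHom

namespace Cospan

variable {m n p : Type}

/-- The cospan with reversed carrier and exchanged legs. -/
def op (A : Cospan m n) : Cospan n m where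
  G := A.G.op
  inp := A.out
  out := A.inp

/-- The half of monogamy that concerns the input leg and in-degrees; the other half is the same
condition on `A.op`. -/
structure InpMonogamous (A : Cospan m n) : Prop where
  inp_injective : Function.Injective A.inp
  inDegZero_inp : ∀ x, A.G.inDegZero (A.inp x)
  inDegOne : ∀ v ∉ Set.range A.inp, A.G.inDegOne v

theorem monogamous_iff_inpMonogamous_and_op {A : Cospan m n} :
    A.Monogamous ↔ A.InpMonogamous ∧ A.op.InpMonogamous := by
  constructor
  · rintro ⟨hinp, hout, hin0, hin1, hout0, hout1⟩
    exact ⟨⟨hinp, fun x => hin0 _ ⟨x, rfl⟩, hin1⟩, ⟨hout, fun y => hout0 _ ⟨y, rfl⟩, hout1⟩⟩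
  · rintro ⟨⟨hinp, hin0, hin1⟩, ⟨hout, hout0, hout1⟩⟩
    exact ⟨hinp, hout, Set.forall_mem_range.2 hin0, hin1, Set.forall_mem_range.2 hout0, hout1⟩

/-- The homomorphisms `i` and `j` exhibit `C` as obtained by gluing `A` and `B` along their common
interface: they are injective on nodes, jointly cover `C`, and their images share exactly the
interface nodes.  Unlike the pushout construction `Cospan.comp`, this description is visibly
symmetric under `Cospan.op`.  Nothing is required of the overlap of the two images on
hyperedges. -/
structure IsGluing (A : Cospan m n) (B : Cospan n p) (C : Cospan m p)
    (i : HypHom A.G C.G) (j : HypHom B.G C.G) : Prop where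
  nodeMap_inp : ∀ x, i.nodeMap (A.inp x) = C.inp x
  nodeMap_out : ∀ y, j.nodeMap (B.out y) = C.out y
  injective_left : Function.Injective i.nodeMap
  injective_right : Function.Injective j.nodeMap
  nodeMap_eq_iff : ∀ v w, i.nodeMap v = j.nodeMap w ↔ ∃ k, A.out k = v ∧ B.inp k = w
  node_cover : ∀ x, x ∈ Set.range i.nodeMap ∨ x ∈ Set.range j.nodeMap
  edge_cover : ∀ e, e ∈ Set.range i.edgeMap ∨ e ∈ Set.range j.edgeMap

namespace IsGluing

variable {A : Cospan m n} {B : Cospan n p} {C : Cospan m p}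
  {i : HypHom A.G C.G} {j : HypHom B.G C.G}

theorem op (g : IsGluing A B C i j) : IsGluing B.op A.op C.op j.op i.op where
  nodeMap_inp := g.nodeMap_out
  nodeMap_out := g.nodeMap_inp
  injective_left := g.injective_right
  injective_right := g.injective_left
  nodeMap_eq_iff w v :=
    eq_comm.trans ((g.nodeMap_eq_iff v w).trans (exists_congr fun _ => and_comm))
  node_cover x := (g.node_cover x).symm
  edge_cover e := (g.edge_cover e).symm

theorem mem_range_or_exists_notMem_range_inp (g : IsGluing A B C i j) (x : C.G.V) :
    x ∈ Set.range i.nodeMap ∨ ∃ w ∉ Set.range B.inp, j.nodeMap w = x := by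
  refine or_iff_not_imp_left.2 fun hx => ?_
  obtain ⟨w, rfl⟩ := (g.node_cover x).resolve_left hx
  refine ⟨w, ?_, rfl⟩
  rintro ⟨k, rfl⟩
  exact hx ⟨A.out k, (g.nodeMap_eq_iff _ _).2 ⟨k, rfl, rfl⟩⟩

theorem nodeMap_ne_of_mem_tgt (g : IsGluing A B C i j) (hB : ∀ k, B.G.inDegZero (B.inp k))
    {v : A.G.V} {w : B.G.V} {e : B.G.E} (hw : w ∈ B.G.tgt e) : i.nodeMap v ≠ j.nodeMap w := by
  intro h
  obtain ⟨k, -, rfl⟩ := (g.nodeMap_eq_iff v w).1 h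
  exact Hyp.inDegZero_iff_forall_notMem_tgt.1 (hB k) e hw

theorem mem_range_left_of_mem_tgt (g : IsGluing A B C i j) (hB : ∀ k, B.G.inDegZero (B.inp k))
    {v : A.G.V} {h : C.G.E} (hv : i.nodeMap v ∈ C.G.tgt h) : h ∈ Set.range i.edgeMap := by
  refine (g.edge_cover h).resolve_right ?_
  rintro ⟨e, rfl⟩
  obtain ⟨w, hw, hwv⟩ := j.exists_nodeMap_eq_of_mem_tgt hv
  exact g.nodeMap_ne_of_mem_tgt hB hw hwv.symm

theorem mem_range_right_of_mem_tgt (g : IsGluing A B C i j) {w : B.G.V}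
    (hw : w ∉ Set.range B.inp) {h : C.G.E} (hwh : j.nodeMap w ∈ C.G.tgt h) :
    h ∈ Set.range j.edgeMap := by
  refine (g.edge_cover h).resolve_left ?_
  rintro ⟨e, rfl⟩
  obtain ⟨v, -, hvw⟩ := i.exists_nodeMap_eq_of_mem_tgt hwh
  obtain ⟨k, -, hk⟩ := (g.nodeMap_eq_iff v w).1 hvw
  exact hw ⟨k, hk⟩

theorem mem_range_right_of_successor (g : IsGluing A B C i j)
    (hB : ∀ k, B.G.inDegZero (B.inp k)) {h h' : C.G.E} (hs : C.G.Successor h h')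
    (hh : h ∈ Set.range j.edgeMap) : h' ∈ Set.range j.edgeMap := by
  obtain ⟨x, hx, hx'⟩ := hs
  obtain ⟨e, rfl⟩ := hh
  obtain ⟨w, hw, rfl⟩ := j.exists_nodeMap_eq_of_mem_tgt hx
  refine (g.edge_cover h').resolve_left ?_
  rintro ⟨e', rfl⟩
  obtain ⟨v, -, hvw⟩ := i.exists_nodeMap_eq_of_mem_src hx'
  exact g.nodeMap_ne_of_mem_tgt hB hw hvw

theorem inpMonogamous (g : IsGluing A B C i j) (hA : A.InpMonogamous) (hB : B.InpMonogamous) :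
    C.InpMonogamous where
  inp_injective := by
    have hcomp : C.inp = i.nodeMap ∘ A.inp := funext fun x => (g.nodeMap_inp x).symm
    exact hcomp ▸ g.injective_left.comp hA.inp_injective
  inDegZero_inp x := by
    rw [← g.nodeMap_inp]
    exact HypHom.inDegZero_nodeMap g.injective_left
      (fun _ => g.mem_range_left_of_mem_tgt hB.inDegZero_inp) (hA.inDegZero_inp x)
  inDegOne x hx := by
    rcases g.mem_range_or_exists_notMem_range_inp x with ⟨v, rfl⟩ | ⟨w, hw, rfl⟩
    · have hv : v ∉ Set.range A.inp := by
        rintro ⟨y, rfl⟩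
        exact hx ⟨y, (g.nodeMap_inp y).symm⟩
      exact HypHom.inDegOne_nodeMap g.injective_left
        (fun _ => g.mem_range_left_of_mem_tgt hB.inDegZero_inp) (hA.inDegOne v hv)
    · exact HypHom.inDegOne_nodeMap g.injective_right
        (fun _ => g.mem_range_right_of_mem_tgt hw) (hB.inDegOne w hw)

theorem monogamous (g : IsGluing A B C i j) (hA : A.Monogamous) (hB : B.Monogamous) :
    C.Monogamous := by
  rw [monogamous_iff_inpMonogamous_and_op] at hA hB ⊢
  exact ⟨g.inpMonogamous hA.1 hB.1, g.op.inpMonogamous hB.2 hA.2⟩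

theorem acyclic (g : IsGluing A B C i j) (hB : ∀ k, B.G.inDegZero (B.inp k))
    (hAa : A.Acyclic) (hBa : B.Acyclic) : C.Acyclic := by
  intro x l hl
  rcases hl.forall_mem_or_forall_notMem_of_closed (S := Set.range j.edgeMap)
    (fun _ _ => g.mem_range_right_of_successor hB) with hright | hnotRight
  · exact j.not_pathFrom_of_acyclic g.injective_right hBa hright x hl
  · have hleft : ∀ h ∈ l, h ∈ Set.range i.edgeMap := fun h hh =>
      (g.edge_cover h).resolve_right (hnotRight h hh)
    exact i.not_pathFrom_of_acyclic g.injective_left hAa hleft x hl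

end IsGluing

section Comp

open CategoryTheory Limits

variable (A : Cospan m n) (B : Cospan n p)

/-- The canonical homomorphism from the first carrier to the carrier of the composite. -/
def compInl : HypHom A.G (A.comp B).G where
  nodeMap v := Quot.mk _ (Sum.inl v)
  edgeMap := Sum.inl
  src_eq _ := rfl
  tgt_eq _ := rfl

/-- The canonical homomorphism from the second carrier to the carrier of the composite. -/
def compInr : HypHom B.G (A.comp B).G where
  nodeMap w := Quot.mk _ (Sum.inr w)
  edgeMap := Sum.inr
  src_eq _ := rfl
  tgt_eq _ := rfl

/-- Identifies the nodes of the composite with Mathlib's pushout of types, whose description for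
injective maps then applies. -/
def compNodeEquiv : (A.comp B).G.V ≃ Types.Pushout (↾A.out) (↾B.inp) :=
  Quot.congrRight fun _ _ =>
    ⟨by rintro ⟨k, rfl, rfl⟩; exact .inl_inr k, by rintro ⟨k⟩; exact ⟨k, rfl, rfl⟩⟩

variable {A B}

theorem isGluing_comp (hA : Function.Injective A.out) (hB : Function.Injective B.inp) :
    IsGluing A B (A.comp B) (A.compInl B) (A.compInr B) where
  nodeMap_inp _ := rfl
  nodeMap_out _ := rfl
  injective_left := by
    have : Mono (↾B.inp) := (mono_iff_injective _).2 hB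
    exact .of_comp (f := A.compNodeEquiv B) ((mono_iff_injective _).1 (Types.mono_inl ..))
  injective_right := by
    have : Mono (↾A.out) := (mono_iff_injective _).2 hA
    exact .of_comp (f := A.compNodeEquiv B) ((mono_iff_injective _).1 (Types.Pushout.mono_inr ..))
  nodeMap_eq_iff v w := by
    have : Mono (↾A.out) := (mono_iff_injective _).2 hA
    exact (A.compNodeEquiv B).apply_eq_iff_eq.symm.trans (Types.Pushout.inl_eq_inr_iff _ _ v w)
  node_cover := by
    rintro ⟨v | w⟩
    exacts [.inl ⟨v, rfl⟩, .inr ⟨w, rfl⟩]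
  edge_cover := by
    rintro (e | e)
    exacts [.inl ⟨e, rfl⟩, .inr ⟨e, rfl⟩]

end Comp

end Cospan

theorem composition_monogamous_acyclic_general {m n p : Type} (A : Cospan m n) (B : Cospan n p)
    (hAm : A.Monogamous) (hAa : A.Acyclic) (hBm : B.Monogamous) (hBa : B.Acyclic) :
    (A.comp B).Monogamous ∧ (A.comp B).Acyclic := by
  obtain ⟨-, hAout⟩ := Cospan.monogamous_iff_inpMonogamous_and_op.1 hAm
  obtain ⟨hBinp, -⟩ := Cospan.monogamous_iff_inpMonogamous_and_op.1 hBm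
  have g := Cospan.isGluing_comp hAout.inp_injective hBinp.inp_injective
  exact ⟨g.monogamous hAm hBm, g.acyclic hBinp.inDegZero_inp hAa hBa⟩

/-- If `m → G ← n` and `n → H ← p` are monogamous acyclic
cospans of hypergraphs with discrete interfaces, then their composite cospan
`m → G +_n H ← p` (obtained by pushout) is monogamous and acyclic. -/
theorem composition_monogamous_acyclic {m n p : Type} [Finite m] [Finite n] [Finite p]
    (A : Cospan m n) (B : Cospan n p)
    (hAm : A.Monogamous) (hAa : A.Acyclic) (hBm : B.Monogamous) (hBa : B.Acyclic) :
    (A.comp B).Monogamous ∧ (A.comp B).Acyclic :=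
  composition_monogamous_acyclic_general A B hAm hAa hBm hBa

end SDRT
end

section
/- (Characterisation of the image of the interpretation) Let Σ be a monoidal signature. A cospan n → G ← m of Σ-labelled hypergraphs with finite carrier is isomorphic to the interpretation ⟦t⟧ of some Σ-term t : n → m if and only if it is monogamous and acyclic. -/
namespace SDRT

/-! ### Labelled hypergraphs -/

/-- A monoidal signature: a set of operation symbols, each with an arity and a
coarity. -/
structure MonSig : Type 1 where
  ops : Type
  ar : ops → ℕ
  coar : ops → ℕ

/-- A `Σ`-labelled hypergraph: each hyperedge carries a label whose arity and
coarity match the numbers of sources and targets of the hyperedge. -/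
structure LHyp (S : MonSig) extends Hyp where
  label : E → S.ops
  src_len : ∀ e, (src e).length = S.ar (label e)
  tgt_len : ∀ e, (tgt e).length = S.coar (label e)

/-- A homomorphism of `Σ`-labelled hypergraphs. -/
structure LHom {S : MonSig} (G H : LHyp S) where
  nodeMap : G.V → H.V
  edgeMap : G.E → H.E
  src_eq : ∀ e, H.src (edgeMap e) = (G.src e).map nodeMap
  tgt_eq : ∀ e, H.tgt (edgeMap e) = (G.tgt e).map nodeMap
  label_eq : ∀ e, H.label (edgeMap e) = G.label e

/-- Composition (diagrammatic order) of homomorphisms. -/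
def LHom.comp {S : MonSig} {G H K : LHyp S} (f : LHom G H) (g : LHom H K) : LHom G K where
  nodeMap := g.nodeMap ∘ f.nodeMap
  edgeMap := g.edgeMap ∘ f.edgeMap
  src_eq := by intro e; simp only [Function.comp_apply, g.src_eq, f.src_eq, List.map_map]
  tgt_eq := by intro e; simp only [Function.comp_apply, g.tgt_eq, f.tgt_eq, List.map_map]
  label_eq := by intro e; simp only [Function.comp_apply, g.label_eq, f.label_eq]

/-- The underlying homomorphism of unlabelled hypergraphs. -/
def LHom.toHypHom {S : MonSig} {G H : LHyp S} (f : LHom G H) : HypHom G.toHyp H.toHyp :=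
  ⟨f.nodeMap, f.edgeMap, f.src_eq, f.tgt_eq⟩

/-- The discrete `Σ`-labelled hypergraph on a set `I` of nodes (no hyperedges). -/
def discreteLHyp (S : MonSig) (I : Type) : LHyp S where
  V := I
  E := Empty
  src := Empty.elim
  tgt := Empty.elim
  label := fun e => e.elim
  src_len := fun e => e.elim
  tgt_len := fun e => e.elim

/-- A homomorphism out of a discrete hypergraph is just a function on nodes. -/
def discreteHom {S : MonSig} {I : Type} (C : LHyp S) (c : I → C.V) :
    LHom (discreteLHyp S I) C where
  nodeMap := c
  edgeMap := Empty.elim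
  src_eq := fun e => e.elim
  tgt_eq := fun e => e.elim
  label_eq := fun e => e.elim

/-- The square `f ; inA = g ; inB` is a pushout of `Σ`-labelled hypergraphs. -/
def IsPushout {S : MonSig} {X A B P : LHyp S} (f : LHom X A) (g : LHom X B)
    (inA : LHom A P) (inB : LHom B P) : Prop :=
  f.comp inA = g.comp inB ∧
  ∀ (W : LHyp S) (u : LHom A W) (w : LHom B W), f.comp u = g.comp w →
    ∃! t : LHom P W, inA.comp t = u ∧ inB.comp t = w

/-- A cospan of `Σ`-labelled hypergraphs with discrete interfaces. -/
structure LCospan (S : MonSig) (m n : Type) : Type 1 where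
  G : LHyp S
  inp : m → G.V
  out : n → G.V

namespace LCospan

/-- The underlying unlabelled cospan. -/
def toCospan {S : MonSig} {m n : Type} (A : LCospan S m n) : Cospan m n :=
  ⟨A.G.toHyp, A.inp, A.out⟩

def Monogamous {S : MonSig} {m n : Type} (A : LCospan S m n) : Prop := A.toCospan.Monogamous

def Acyclic {S : MonSig} {m n : Type} (A : LCospan S m n) : Prop := A.G.toHyp.Acyclic

/-- Composition of labelled cospans by pushout (gluing along the common interface). -/
def comp {S : MonSig} {m n p : Type} (A : LCospan S m n) (B : LCospan S n p) :
    LCospan S m p where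
  G := { V := Quot (fun x y : A.G.V ⊕ B.G.V =>
                      ∃ k : n, x = Sum.inl (A.out k) ∧ y = Sum.inr (B.inp k))
         E := A.G.E ⊕ B.G.E
         src := Sum.elim (fun e => (A.G.src e).map (fun v => Quot.mk _ (Sum.inl v)))
                         (fun e => (B.G.src e).map (fun v => Quot.mk _ (Sum.inr v)))
         tgt := Sum.elim (fun e => (A.G.tgt e).map (fun v => Quot.mk _ (Sum.inl v)))
                         (fun e => (B.G.tgt e).map (fun v => Quot.mk _ (Sum.inr v)))
         label := Sum.elim A.G.label B.G.label
         src_len := by rintro (e | e) <;> simp [A.G.src_len, B.G.src_len]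
         tgt_len := by rintro (e | e) <;> simp [A.G.tgt_len, B.G.tgt_len] }
  inp := fun x => Quot.mk _ (Sum.inl (A.inp x))
  out := fun y => Quot.mk _ (Sum.inr (B.out y))

/-- Monoidal product (disjoint union) of labelled cospans. -/
def tensor {S : MonSig} {m₁ n₁ m₂ n₂ : Type} (A : LCospan S m₁ n₁) (B : LCospan S m₂ n₂) :
    LCospan S (m₁ ⊕ m₂) (n₁ ⊕ n₂) where
  G := { V := A.G.V ⊕ B.G.V
         E := A.G.E ⊕ B.G.E
         src := Sum.elim (fun e => (A.G.src e).map Sum.inl) (fun e => (B.G.src e).map Sum.inr)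
         tgt := Sum.elim (fun e => (A.G.tgt e).map Sum.inl) (fun e => (B.G.tgt e).map Sum.inr)
         label := Sum.elim A.G.label B.G.label
         src_len := by rintro (e | e) <;> simp [A.G.src_len, B.G.src_len]
         tgt_len := by rintro (e | e) <;> simp [A.G.tgt_len, B.G.tgt_len] }
  inp := Sum.elim (fun x => Sum.inl (A.inp x)) (fun x => Sum.inr (B.inp x))
  out := Sum.elim (fun y => Sum.inl (A.out y)) (fun y => Sum.inr (B.out y))

/-- Reindexing of the interfaces of a cospan along functions. -/
def reind {S : MonSig} {m n m' n' : Type} (A : LCospan S m n) (f : m' → m) (g : n' → n) :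
    LCospan S m' n' :=
  ⟨A.G, A.inp ∘ f, A.out ∘ g⟩

end LCospan

/-- An isomorphism of labelled cospans. -/
structure LCospanIso {S : MonSig} {m n : Type} (A B : LCospan S m n) where
  nodeEquiv : A.G.V ≃ B.G.V
  edgeEquiv : A.G.E ≃ B.G.E
  src_eq : ∀ e, B.G.src (edgeEquiv e) = (A.G.src e).map nodeEquiv
  tgt_eq : ∀ e, B.G.tgt (edgeEquiv e) = (A.G.tgt e).map nodeEquiv
  label_eq : ∀ e, B.G.label (edgeEquiv e) = A.G.label e
  inp_eq : ∀ x, nodeEquiv (A.inp x) = B.inp x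
  out_eq : ∀ y, nodeEquiv (A.out y) = B.out y

/-- `A` is a monogamous acyclic cospan. -/
def MonAcyclic {S : MonSig} {m n : Type} (A : LCospan S m n) : Prop :=
  A.Monogamous ∧ A.Acyclic

/-- `(C, c, g)` is a pushout complement of the mono `f : L → G` along the
interface `i + j → L` of the rule. -/
def IsPushoutComplement {S : MonSig} {i j n m : Type} (L : LCospan S i j) (Gc : LCospan S n m)
    (f : LHom L.G Gc.G) (C : LHyp S) (c : i ⊕ j → C.V) (g : LHom C Gc.G) : Prop :=
  IsPushout (discreteHom L.G (Sum.elim L.inp L.out)) (discreteHom C c) f g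

/-- `(C, c, g)` is a boundary complement: a pushout complement in which `c` is mono
and there are `d₁ : n → C`, `d₂ : m → C` commuting with the interface of `G` such
that the cospan `j + n → C ← m + i` is monogamous. -/
def IsBoundaryComplement {S : MonSig} {i j n m : Type} (L : LCospan S i j) (Gc : LCospan S n m)
    (f : LHom L.G Gc.G) (C : LHyp S) (c : i ⊕ j → C.V) (g : LHom C Gc.G) : Prop :=
  IsPushoutComplement L Gc f C c g ∧ Function.Injective c ∧
  ∃ (d₁ : n → C.V) (d₂ : m → C.V),
    (∀ x, g.nodeMap (d₁ x) = Gc.inp x) ∧ (∀ y, g.nodeMap (d₂ y) = Gc.out y) ∧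
    (LCospan.mk C (Sum.elim (fun y : j => c (Sum.inr y)) d₁)
                  (Sum.elim d₂ (fun x : i => c (Sum.inl x)))).Monogamous

/-- A convex DPO rewriting step from `D ← n+m` to `E ← n+m` using the rule
`L ← i+j → R`: a mono matching `f : L → D` with convex image, and a boundary
(pushout) complement `C` such that pasting `R` back along `i+j` yields `E`,
with all interfaces preserved. -/
def ConvexStep {S : MonSig} {i j n m : Type} (Lr Rr : LCospan S i j)
    (D E : LCospan S n m) : Prop :=
  ∃ (f : LHom Lr.G D.G) (C : LHyp S) (c : i ⊕ j → C.V) (q : n ⊕ m → C.V)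
    (g : LHom C D.G) (r : LHom Rr.G E.G) (h : LHom C E.G),
    Function.Injective f.nodeMap ∧ Function.Injective f.edgeMap ∧
    f.toHypHom.image.Convex ∧
    IsPushout (discreteHom Lr.G (Sum.elim Lr.inp Lr.out)) (discreteHom C c) f g ∧
    IsPushout (discreteHom Rr.G (Sum.elim Rr.inp Rr.out)) (discreteHom C c) r h ∧
    (∀ x, g.nodeMap (q (Sum.inl x)) = D.inp x) ∧
    (∀ y, g.nodeMap (q (Sum.inr y)) = D.out y) ∧
    (∀ x, h.nodeMap (q (Sum.inl x)) = E.inp x) ∧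
    (∀ y, h.nodeMap (q (Sum.inr y)) = E.out y) ∧
    Function.Injective c ∧
    (LCospan.mk C (Sum.elim (fun y : j => c (Sum.inr y)) (fun x : n => q (Sum.inl x)))
                  (Sum.elim (fun y : m => q (Sum.inr y)) (fun x : i => c (Sum.inl x)))).Monogamous

/-! ### Σ-terms, the SMC congruence, and the interpretation into cospans -/

/-- Terms over a monoidal signature, generated by the operations, identities,
symmetries, sequential composition and monoidal product. -/
inductive Term (S : MonSig) : ℕ → ℕ → Type where
  | op (o : S.ops) : Term S (S.ar o) (S.coar o)
  | id (n : ℕ) : Term S n n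
  | symm (m n : ℕ) : Term S (m + n) (n + m)
  | seq {m n p : ℕ} : Term S m n → Term S n p → Term S m p
  | par {m₁ n₁ m₂ n₂ : ℕ} : Term S m₁ n₁ → Term S m₂ n₂ → Term S (m₁ + m₂) (n₁ + n₂)

/-- Transport of a term along equalities of its (co)arities. -/
def castTerm {S : MonSig} {m m' n n' : ℕ} (h₁ : m = m') (h₂ : n = n')
    (t : Term S m n) : Term S m' n' := h₁ ▸ h₂ ▸ t

/-- The congruence on terms generated by the laws of symmetric strict monoidal
categories. -/
inductive SMC (S : MonSig) : {m n : ℕ} → Term S m n → Term S m n → Prop where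
  | refl {m n} (t : Term S m n) : SMC S t t
  | symm' {m n} {t u : Term S m n} : SMC S t u → SMC S u t
  | trans {m n} {t u v : Term S m n} : SMC S t u → SMC S u v → SMC S t v
  | seq_congr {m n p} {t t' : Term S m n} {u u' : Term S n p} :
      SMC S t t' → SMC S u u' → SMC S (t.seq u) (t'.seq u')
  | par_congr {m₁ n₁ m₂ n₂} {t t' : Term S m₁ n₁} {u u' : Term S m₂ n₂} :
      SMC S t t' → SMC S u u' → SMC S (t.par u) (t'.par u')
  | seq_assoc {m n p q} (t : Term S m n) (u : Term S n p) (v : Term S p q) :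
      SMC S ((t.seq u).seq v) (t.seq (u.seq v))
  | id_seq {m n} (t : Term S m n) : SMC S ((Term.id m).seq t) t
  | seq_id {m n} (t : Term S m n) : SMC S (t.seq (Term.id n)) t
  | par_assoc {m₁ n₁ m₂ n₂ m₃ n₃} (t : Term S m₁ n₁) (u : Term S m₂ n₂) (v : Term S m₃ n₃) :
      SMC S (castTerm (Nat.add_assoc m₁ m₂ m₃) (Nat.add_assoc n₁ n₂ n₃) ((t.par u).par v))
            (t.par (u.par v))
  | id_zero_par {m n} (t : Term S m n) :
      SMC S (castTerm (Nat.zero_add m) (Nat.zero_add n) ((Term.id 0).par t)) t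
  | par_id_zero {m n} (t : Term S m n) : SMC S (t.par (Term.id 0)) t
  | interchange {m₁ n₁ p₁ m₂ n₂ p₂} (s : Term S m₁ n₁) (u : Term S n₁ p₁)
      (t : Term S m₂ n₂) (v : Term S n₂ p₂) :
      SMC S ((s.seq u).par (t.seq v)) ((s.par t).seq (u.par v))
  | id_par_id (m n : ℕ) : SMC S ((Term.id m).par (Term.id n)) (Term.id (m + n))
  | symm_symm (m n : ℕ) : SMC S ((Term.symm m n).seq (Term.symm n m)) (Term.id (m + n))
  | symm_hexagon (m n o : ℕ) :
      SMC S ((castTerm rfl (Nat.add_assoc n m o) ((Term.symm m n).par (Term.id o))).seq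
              ((Term.id n).par (Term.symm m o)))
            (castTerm (Nat.add_assoc m n o).symm (Nat.add_assoc n o m) (Term.symm m (n + o)))
  | symm_nat {o n : ℕ} (s : Term S o n) (m : ℕ) :
      SMC S ((s.par (Term.id m)).seq (Term.symm n m)) ((Term.symm o m).seq ((Term.id m).par s))

/-- The cospan interpreting a generator `o : k → l`: the carrier has `k + l`
nodes and a single `o`-labelled hyperedge whose ordered sources are the interface
inputs and whose ordered targets are the interface outputs. -/
def genCospan {S : MonSig} (o : S.ops) : LCospan S (Fin (S.ar o)) (Fin (S.coar o)) where
  G := { V := Fin (S.ar o) ⊕ Fin (S.coar o)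
         E := Unit
         src := fun _ => (List.finRange (S.ar o)).map Sum.inl
         tgt := fun _ => (List.finRange (S.coar o)).map Sum.inr
         label := fun _ => o
         src_len := by intro e; simp
         tgt_len := by intro e; simp }
  inp := Sum.inl
  out := Sum.inr

/-- The cospan interpreting `id_k`: discrete carrier with identity legs. -/
def idLCospan (S : MonSig) (k : ℕ) : LCospan S (Fin k) (Fin k) :=
  ⟨discreteLHyp S (Fin k), id, id⟩

/-- The cospan interpreting the symmetry `σ_{m,n}`: discrete carrier on `m + n`
nodes, identity input leg, and the swap permutation as output leg. -/
def symmLCospan (S : MonSig) (m n : ℕ) : LCospan S (Fin (m + n)) (Fin (n + m)) :=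
  ⟨discreteLHyp S (Fin (m + n)), id, fun x => finAddFlip x⟩

/-- The interpretation of terms as cospans of labelled hypergraphs with discrete
interfaces. -/
def interp {S : MonSig} : {m n : ℕ} → Term S m n → LCospan S (Fin m) (Fin n)
  | _, _, .op o => genCospan o
  | _, _, .id k => idLCospan S k
  | _, _, .symm m n => symmLCospan S m n
  | _, _, .seq t u => (interp t).comp (interp u)
  | _, _, .par t u =>
      ((interp t).tensor (interp u)).reind (finSumFinEquiv.symm) (finSumFinEquiv.symm)

/-- A rewriting system on `Σ`-terms: a set of pairs of terms with equal arities
and coarities. -/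
abbrev TermRules (S : MonSig) := Set (Σ i j : ℕ, Term S i j × Term S i j)

/-- Syntactic rewriting modulo the SMC laws: `d ⇒_R e` iff, modulo the SMC
congruence, `d = c₁ ; (id_k ⊕ l) ; c₂` and `e = c₁ ; (id_k ⊕ r) ; c₂` for some
rule `(l, r)` in `R`. -/
def SynStep {S : MonSig} (R : TermRules S) {n m : ℕ} (d e : Term S n m) : Prop :=
  ∃ (i j : ℕ) (l r : Term S i j), (⟨i, j, (l, r)⟩ ∈ R) ∧
    ∃ (k : ℕ) (c₁ : Term S n (k + i)) (c₂ : Term S (k + j) m),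
      SMC S d (c₁.seq (((Term.id k).par l).seq c₂)) ∧
      SMC S e (c₁.seq (((Term.id k).par r).seq c₂))

/-!
A cospan is monogamous if and only if its inputs together with the targets of its hyperedges list
every node exactly once, and likewise its outputs together with the sources.  This property and
acyclicity survive gluing and disjoint union, so interpretations of terms have both.

Conversely, in a finite acyclic carrier some hyperedge `e` is the successor of no hyperedge, so
monogamy places all its sources on the input interface.  Hence the cospan is, up to a permutation
of the inputs, the composite of `e ⊕ id` with the cospan obtained by deleting `e` and its sources.
Permutations are interpretations because adjacent transpositions generate the symmetric group.
-/

/-! ### Monogamy as exact covering -/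

/-- The values of `f` together with the entries of the lists `l e` run through every element of
`V` exactly once.  With `f` a leg of a cospan and `l` the list of targets (or sources) of its
hyperedges this is one half of monogamy, with no reference to positions in the lists. -/
structure ExactCover {X E V : Type*} (f : X → V) (l : E → List V) : Prop where
  injective : Function.Injective f
  nodup : ∀ e, (l e).Nodup
  notMem : ∀ x e, f x ∉ l e
  eq_of_mem : ∀ {v e e'}, v ∈ l e → v ∈ l e' → e = e'
  exists_or : ∀ v, (∃ x, f x = v) ∨ ∃ e, v ∈ l e

section ExactCover

variable {X X' E E' V V' W : Type*} {f : X → V} {l : E → List V}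

theorem ExactCover.existsUnique_position (h : ExactCover f l) {v : V} (hv : v ∉ Set.range f) :
    ∃! p : E × ℕ, (l p.1)[p.2]? = some v := by
  obtain ⟨e, he⟩ := (h.exists_or v).resolve_left hv
  obtain ⟨i, hi⟩ := List.mem_iff_getElem?.1 he
  refine ⟨(e, i), hi, fun ⟨e', j⟩ hj => ?_⟩
  obtain rfl := h.eq_of_mem he (List.mem_of_getElem? hj)
  rw [(List.getElem?_inj (List.getElem?_eq_some_iff.1 hi).1 (h.nodup e)).1 (hi.trans hj.symm)]

theorem exactCover_iff :
    ExactCover f l ↔ Function.Injective f ∧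
      (∀ v ∈ Set.range f, {p : E × ℕ | (l p.1)[p.2]? = some v} = ∅) ∧
      (∀ v ∉ Set.range f, ∃! p : E × ℕ, (l p.1)[p.2]? = some v) := by
  refine ⟨fun h => ⟨h.injective, ?_, fun v => h.existsUnique_position⟩, fun ⟨hf, h0, h1⟩ => ?_⟩
  · rintro _ ⟨x, rfl⟩
    exact Set.eq_empty_iff_forall_notMem.2 fun p hp => h.notMem x p.1 (List.mem_of_getElem? hp)
  have notMem (x : X) (e : E) : f x ∉ l e := fun hx =>
    have ⟨i, hi⟩ := List.mem_iff_getElem?.1 hx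
    Set.eq_empty_iff_forall_notMem.1 (h0 (f x) ⟨x, rfl⟩) (e, i) hi
  have position_eq {v : V} {p q : E × ℕ} (hp : (l p.1)[p.2]? = some v)
      (hq : (l q.1)[q.2]? = some v) : p = q :=
    (h1 v fun ⟨x, hx⟩ => notMem x p.1 (hx ▸ List.mem_of_getElem? hp)).unique hp hq
  refine ⟨hf, fun e => ?_, notMem, fun {v e e'} he he' => ?_, fun v => ?_⟩
  · refine List.nodup_iff_getElem?_ne_getElem?.2 fun i j hij hj hv => hij.ne ?_
    rw [List.getElem?_eq_getElem hj] at hv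
    exact congrArg Prod.snd (position_eq (p := (e, i)) (q := (e, j)) hv
      (List.getElem?_eq_getElem hj))
  · obtain ⟨i, hi⟩ := List.mem_iff_getElem?.1 he
    obtain ⟨j, hj⟩ := List.mem_iff_getElem?.1 he'
    exact congrArg Prod.fst (position_eq (p := (e, i)) (q := (e', j)) hi hj)
  · refine or_iff_not_imp_left.2 fun hv => ?_
    obtain ⟨p, hp, -⟩ := h1 v hv
    exact ⟨p.1, List.mem_of_getElem? hp⟩

theorem ExactCover.comap (h : ExactCover f l) {g : X' → W} {k : E' → List W} {ι : W → V}
    {η : E' → E} (hι : Function.Injective ι) (hη : Function.Injective η)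
    (hl : ∀ e, l (η e) = (k e).map ι) (hg : Function.Injective g)
    (notMem : ∀ x e, ι (g x) ∉ l (η e))
    (exists_or : ∀ w, (∃ x, g x = w) ∨ ∃ e, ι w ∈ l (η e)) : ExactCover g k := by
  have mem_iff {w : W} {e : E'} : ι w ∈ l (η e) ↔ w ∈ k e := by
    rw [hl, List.mem_map_of_injective hι]
  simp only [mem_iff] at notMem exists_or
  exact ⟨hg, fun e => .of_map ι (hl e ▸ h.nodup _), notMem,
    fun he he' => hη (h.eq_of_mem (mem_iff.2 he) (mem_iff.2 he')), exists_or⟩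

theorem ExactCover.of_equiv (h : ExactCover f l) {g : X' → V'} {k : E' → List V'} (eX : X' ≃ X)
    (eE : E' ≃ E) (eV : V' ≃ V) (hf : ∀ x, eV (g x) = f (eX x))
    (hl : ∀ e, l (eE e) = (k e).map eV) : ExactCover g k := by
  refine h.comap eV.injective eE.injective hl ?_ (fun x e => hf x ▸ h.notMem _ _) fun v => ?_
  · refine .of_comp (f := eV) ?_
    rw [show eV ∘ g = f ∘ eX from funext hf]
    exact h.injective.comp eX.injective
  · refine (h.exists_or (eV v)).imp (fun ⟨x, hx⟩ => ⟨eX.symm x, eV.injective ?_⟩)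
      (fun ⟨e, he⟩ => ⟨eE.symm e, ?_⟩)
    · rw [hf, Equiv.apply_symm_apply, hx]
    · rwa [Equiv.apply_symm_apply]

theorem ExactCover.sum (h : ExactCover f l) {g : X' → W} {k : E' → List W}
    (h' : ExactCover g k) :
    ExactCover (Sum.elim (fun x => (Sum.inl (f x) : V ⊕ W)) (fun x => Sum.inr (g x)))
      (Sum.elim (fun e => (l e).map Sum.inl) (fun e => (k e).map Sum.inr)) where
  injective := (h.injective.sumMap h'.injective :)
  nodup := by
    rintro (e | e)
    · exact (h.nodup e).map Sum.inl_injective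
    · exact (h'.nodup e).map Sum.inr_injective
  notMem := by
    rintro (x | x) (e | e) <;> simp [h.notMem, h'.notMem]
  eq_of_mem := by
    rintro (v | v) (e | e) (e' | e') he he' <;>
      simp_all only [Sum.elim_inl, Sum.elim_inr, List.mem_map, Sum.inl.injEq, Sum.inr.injEq,
        reduceCtorEq, and_false, exists_false, exists_eq_right]
    · exact h.eq_of_mem he he'
    · exact h'.eq_of_mem he he'
  exists_or := by
    rintro (v | v)
    · refine (h.exists_or v).imp (fun ⟨x, hx⟩ => ⟨.inl x, ?_⟩) (fun ⟨e, he⟩ => ⟨.inl e, ?_⟩) <;>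
        simpa
    · refine (h'.exists_or v).imp (fun ⟨x, hx⟩ => ⟨.inr x, ?_⟩) (fun ⟨e, he⟩ => ⟨.inr e, ?_⟩) <;>
        simpa

/-- The points `g x` of `W` are glued to points of `V`, where `f` and `l` already cover them. -/
theorem ExactCover.glue {K U : Type*} (h : ExactCover f l) {g : K → W} {k : E' → List W}
    (h' : ExactCover g k) {p : V → U} {q : W → U} (r : K → V) (hp : Function.Injective p)
    (hq : Function.Injective q) (cover : ∀ u, (∃ v, p v = u) ∨ ∃ w, q w = u)
    (overlap : ∀ v w, p v = q w ↔ ∃ x, r x = v ∧ g x = w) :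
    ExactCover (p ∘ f) (Sum.elim (fun e => (l e).map p) (fun e => (k e).map q)) := by
  have disjoint {v w e} (hw : w ∈ k e) : p v ≠ q w := fun hvw => by
    obtain ⟨x, -, rfl⟩ := (overlap v w).1 hvw
    exact h'.notMem x e hw
  refine ⟨hp.comp h.injective, ?_, ?_, ?_, fun u => ?_⟩
  · rintro (e | e)
    exacts [(h.nodup e).map hp, (h'.nodup e).map hq]
  · rintro x (e | e) hx <;> obtain ⟨w, hw, hwx⟩ := List.mem_map.1 hx
    · exact h.notMem x e (hp hwx ▸ hw)
    · exact disjoint hw hwx.symm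
  · rintro u (e | e) (e' | e') he he' <;> obtain ⟨w, hw, rfl⟩ := List.mem_map.1 he <;>
      obtain ⟨w', hw', hww'⟩ := List.mem_map.1 he'
    · exact congrArg _ (h.eq_of_mem hw (hp hww' ▸ hw'))
    · exact (disjoint hw' hww'.symm).elim
    · exact (disjoint hw hww').elim
    · exact congrArg _ (h'.eq_of_mem hw (hq hww' ▸ hw'))
  · have covered (v : V) : (∃ x, p (f x) = p v) ∨ ∃ e, p v ∈ (l e).map p :=
      (h.exists_or v).imp (fun ⟨x, hx⟩ => ⟨x, congrArg p hx⟩)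
        (fun ⟨e, he⟩ => ⟨e, List.mem_map_of_mem he⟩)
    obtain ⟨v, rfl⟩ | ⟨w, rfl⟩ := cover u
    · exact (covered v).imp_right fun ⟨e, he⟩ => ⟨.inl e, he⟩
    · obtain ⟨x, hx⟩ | ⟨e, he⟩ := h'.exists_or w
      · rw [← (overlap (r x) w).2 ⟨x, rfl, hx⟩]
        exact (covered (r x)).imp_right fun ⟨e, he⟩ => ⟨.inl e, he⟩
      · exact .inr ⟨.inr e, List.mem_map_of_mem he⟩

theorem exactCover_iff_bijective [IsEmpty E] : ExactCover f l ↔ Function.Bijective f where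
  mp h := ⟨h.injective, fun v => (h.exists_or v).resolve_right fun ⟨e, _⟩ => isEmptyElim e⟩
  mpr hf :=
    { injective := hf.1
      nodup := isEmptyElim
      notMem _ := isEmptyElim
      eq_of_mem {_ e} := isEmptyElim e
      exists_or v := .inl (hf.2 v) }

theorem exactCover_inl_finRange (X : Type*) (k : ℕ) :
    ExactCover (Sum.inl : X → X ⊕ Fin k) (fun _ : Unit => (List.finRange k).map Sum.inr) where
  injective := Sum.inl_injective
  nodup _ := (List.nodup_finRange k).map Sum.inr_injective
  notMem _ _ := by simp
  eq_of_mem _ _ := rfl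
  exists_or := by rintro (x | i) <;> simp

end ExactCover

theorem LCospan.monogamous_iff {S : MonSig} {X Y : Type} {A : LCospan S X Y} :
    A.Monogamous ↔ ExactCover A.inp A.G.tgt ∧ ExactCover A.out A.G.src := by
  rw [exactCover_iff, exactCover_iff]
  exact ⟨fun ⟨hi, ho, hi0, hi1, ho0, ho1⟩ => ⟨⟨hi, hi0, hi1⟩, ho, ho0, ho1⟩,
    fun ⟨⟨hi, hi0, hi1⟩, ho, ho0, ho1⟩ => ⟨hi, ho, hi0, hi1, ho0, ho1⟩⟩

/-! ### Acyclicity -/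

theorem Hyp.acyclic_iff {G : Hyp} :
    G.Acyclic ↔ ∀ h, ¬ Relation.TransGen G.Successor h h := by
  refine ⟨fun hG h hh => ?_, fun hG v l ⟨hne, hl, hs, ht⟩ => ?_⟩
  · obtain ⟨h', hr, v, hv, hv'⟩ := Relation.TransGen.tail'_iff.1 hh
    obtain ⟨l, hl, hlast⟩ := List.exists_isChain_cons_of_relationReflTransGen hr
    exact hG v (h :: l) ⟨List.cons_ne_nil _ _, hl, hv', hlast ▸ hv⟩
  · obtain ⟨h, l, rfl⟩ := List.exists_cons_of_ne_nil hne
    exact hG h (.tail' (List.relationReflTransGen_of_exists_isChain_cons l hl rfl) ⟨v, ht, hs⟩)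

theorem Hyp.acyclic_of_forall_not_successor {G : Hyp} (hG : ∀ h h', ¬ G.Successor h h') :
    G.Acyclic :=
  acyclic_iff.2 fun _ hh =>
    have ⟨_, _, hs⟩ := Relation.TransGen.tail'_iff.1 hh
    hG _ _ hs

theorem Hyp.Acyclic.comap {G H : Hyp} (hH : H.Acyclic) (f : HypHom G H) : G.Acyclic :=
  acyclic_iff.2 fun _ hh => acyclic_iff.1 hH _ <| hh.lift f.edgeMap fun _ _ ⟨v, hv, hv'⟩ =>
    ⟨f.nodeMap v, f.tgt_eq _ ▸ List.mem_map_of_mem hv, f.src_eq _ ▸ List.mem_map_of_mem hv'⟩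

theorem Hyp.acyclic_of_sumLex {G A B : Hyp} (hA : A.Acyclic) (hB : B.Acyclic)
    (φ : G.E → A.E ⊕ B.E)
    (hφ : ∀ h h', G.Successor h h' → Sum.Lex A.Successor B.Successor (φ h) (φ h')) :
    G.Acyclic := by
  have : Std.Irrefl (Relation.TransGen A.Successor) := ⟨acyclic_iff.1 hA⟩
  have : Std.Irrefl (Relation.TransGen B.Successor) := ⟨acyclic_iff.1 hB⟩
  have lex_le : Sum.Lex A.Successor B.Successor ≤
      Sum.Lex (Relation.TransGen A.Successor) (Relation.TransGen B.Successor) :=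
    fun _ _ h => h.mono (fun _ _ => .single) (fun _ _ => .single)
  exact acyclic_iff.2 fun h hh =>
    irrefl_of _ (φ h) (Relation.transGen_minimal lex_le _ _ (hh.lift φ hφ))

/-- The hyperedge `e` is not a successor of any hyperedge. -/
def Hyp.IsInitial (G : Hyp) (e : G.E) : Prop := ∀ h, ¬ G.Successor h e

theorem Hyp.Acyclic.exists_isInitial {G : Hyp} [Finite G.E] [Nonempty G.E] (hG : G.Acyclic) :
    ∃ e, G.IsInitial e := by
  have : Std.Irrefl (Relation.TransGen G.Successor) := ⟨acyclic_iff.1 hG⟩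
  obtain ⟨e, -, he⟩ := (Finite.wellFounded_of_trans_of_irrefl
    (Relation.TransGen G.Successor)).has_min Set.univ Set.univ_nonempty
  exact ⟨e, fun h hh => he h trivial (.single hh)⟩

/-! ### Isomorphisms and gluings of cospans -/

namespace LHom

variable {S : MonSig} {X Y Z X' Y' : Type}

/-- The embedding of the first factor into a monoidal product. -/
def inl (A : LCospan S X Y) (A' : LCospan S X' Y') : LHom A.G (A.tensor A').G :=
  ⟨Sum.inl, Sum.inl, fun _ => rfl, fun _ => rfl, fun _ => rfl⟩

/-- The embedding of the second factor into a monoidal product. -/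
def inr (A : LCospan S X Y) (A' : LCospan S X' Y') : LHom A'.G (A.tensor A').G :=
  ⟨Sum.inr, Sum.inr, fun _ => rfl, fun _ => rfl, fun _ => rfl⟩

/-- The homomorphism out of the carrier of a monoidal product with given restrictions. -/
def copair {A : LCospan S X Y} {A' : LCospan S X' Y'} {G : LHyp S} (f : LHom A.G G)
    (g : LHom A'.G G) : LHom (A.tensor A').G G where
  nodeMap := Sum.elim f.nodeMap g.nodeMap
  edgeMap := Sum.elim f.edgeMap g.edgeMap
  src_eq := by rintro (e | e) <;> simp [LCospan.tensor, f.src_eq, g.src_eq]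
  tgt_eq := by rintro (e | e) <;> simp [LCospan.tensor, f.tgt_eq, g.tgt_eq]
  label_eq := by
    rintro (e | e)
    exacts [f.label_eq e, g.label_eq e]

/-- The embedding of the first factor into a pushout composite. -/
def compInl (A : LCospan S X Y) (B : LCospan S Y Z) : LHom A.G (A.comp B).G :=
  ⟨fun v => Quot.mk _ (.inl v), .inl, fun _ => rfl, fun _ => rfl, fun _ => rfl⟩

/-- The embedding of the second factor into a pushout composite. -/
def compInr (A : LCospan S X Y) (B : LCospan S Y Z) : LHom B.G (A.comp B).G :=
  ⟨fun w => Quot.mk _ (.inr w), .inr, fun _ => rfl, fun _ => rfl, fun _ => rfl⟩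

/-- The homomorphism out of a pushout composite induced by a commutative square. -/
def compDesc {A : LCospan S X Y} {B : LCospan S Y Z} {G : LHyp S} (f : LHom A.G G)
    (g : LHom B.G G) (h : ∀ y, f.nodeMap (A.out y) = g.nodeMap (B.inp y)) :
    LHom (A.comp B).G G where
  nodeMap := Quot.lift (Sum.elim f.nodeMap g.nodeMap) (by
    rintro _ _ ⟨y, rfl, rfl⟩
    exact h y)
  edgeMap := Sum.elim f.edgeMap g.edgeMap
  src_eq := by rintro (e | e) <;> simp [LCospan.comp, f.src_eq, g.src_eq, Function.comp_def]
  tgt_eq := by rintro (e | e) <;> simp [LCospan.comp, f.tgt_eq, g.tgt_eq, Function.comp_def]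
  label_eq := by
    rintro (e | e)
    exacts [f.label_eq e, g.label_eq e]

end LHom

namespace LCospanIso

open LHom

variable {S : MonSig} {X Y X' Y' : Type} {A B C : LCospan S X Y} {A' B' : LCospan S X' Y'}

/-- The identity isomorphism. -/
def refl (A : LCospan S X Y) : LCospanIso A A where
  nodeEquiv := .refl _
  edgeEquiv := .refl _
  src_eq _ := (List.map_id _).symm
  tgt_eq _ := (List.map_id _).symm
  label_eq _ := rfl
  inp_eq _ := rfl
  out_eq _ := rfl

/-- The inverse of an isomorphism. -/
def symm (i : LCospanIso A B) : LCospanIso B A where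
  nodeEquiv := i.nodeEquiv.symm
  edgeEquiv := i.edgeEquiv.symm
  src_eq e := by
    obtain ⟨e, rfl⟩ := i.edgeEquiv.surjective e
    simp [i.src_eq]
  tgt_eq e := by
    obtain ⟨e, rfl⟩ := i.edgeEquiv.surjective e
    simp [i.tgt_eq]
  label_eq e := by rw [← i.label_eq, Equiv.apply_symm_apply]
  inp_eq x := by rw [← i.inp_eq, Equiv.symm_apply_apply]
  out_eq y := by rw [← i.out_eq, Equiv.symm_apply_apply]

/-- The composite of two isomorphisms. -/
def trans (i : LCospanIso A B) (j : LCospanIso B C) : LCospanIso A C where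
  nodeEquiv := i.nodeEquiv.trans j.nodeEquiv
  edgeEquiv := i.edgeEquiv.trans j.edgeEquiv
  src_eq := by simp [i.src_eq, j.src_eq]
  tgt_eq := by simp [i.tgt_eq, j.tgt_eq]
  label_eq := by simp [i.label_eq, j.label_eq]
  inp_eq := by simp [i.inp_eq, j.inp_eq]
  out_eq := by simp [i.out_eq, j.out_eq]

/-- Reindexing the interfaces of isomorphic cospans. -/
def reind (i : LCospanIso A B) (f : X' → X) (g : Y' → Y) :
    LCospanIso (A.reind f g) (B.reind f g) where
  nodeEquiv := i.nodeEquiv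
  edgeEquiv := i.edgeEquiv
  src_eq := i.src_eq
  tgt_eq := i.tgt_eq
  label_eq := i.label_eq
  inp_eq x := i.inp_eq (f x)
  out_eq y := i.out_eq (g y)

/-- The homomorphism of carriers underlying an isomorphism of cospans. -/
def toLHom (i : LCospanIso A B) : LHom A.G B.G :=
  ⟨i.nodeEquiv, i.edgeEquiv, i.src_eq, i.tgt_eq, i.label_eq⟩

/-- The monoidal product of two isomorphisms. -/
def tensor (i : LCospanIso A B) (j : LCospanIso A' B') :
    LCospanIso (A.tensor A') (B.tensor B') where
  nodeEquiv := .sumCongr i.nodeEquiv j.nodeEquiv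
  edgeEquiv := .sumCongr i.edgeEquiv j.edgeEquiv
  src_eq := (copair (i.toLHom.comp (inl B B')) (j.toLHom.comp (inr B B'))).src_eq
  tgt_eq := (copair (i.toLHom.comp (inl B B')) (j.toLHom.comp (inr B B'))).tgt_eq
  label_eq := by
    rintro (e | e)
    exacts [i.label_eq e, j.label_eq e]
  inp_eq := by
    rintro (x | x)
    exacts [congrArg Sum.inl (i.inp_eq x), congrArg Sum.inr (j.inp_eq x)]
  out_eq := by
    rintro (y | y)
    exacts [congrArg Sum.inl (i.out_eq y), congrArg Sum.inr (j.out_eq y)]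

instance [IsEmpty A.G.E] (f : X' → X) (g : Y' → Y) : IsEmpty (A.reind f g).G.E :=
  inferInstanceAs (IsEmpty A.G.E)

instance [IsEmpty A.G.E] [IsEmpty A'.G.E] : IsEmpty (A.tensor A').G.E :=
  inferInstanceAs (IsEmpty (A.G.E ⊕ A'.G.E))

/-- An isomorphism between cospans without hyperedges. -/
def ofIsEmpty [IsEmpty A.G.E] [IsEmpty B.G.E] (e : A.G.V ≃ B.G.V)
    (inp_eq : ∀ x, e (A.inp x) = B.inp x) (out_eq : ∀ y, e (A.out y) = B.out y) :
    LCospanIso A B :=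
  ⟨e, .equivOfIsEmpty _ _, isEmptyElim, isEmptyElim, isEmptyElim, inp_eq, out_eq⟩

end LCospanIso

section QuotSum

variable {K V W : Type*} {f : K → V} {g : K → W}

-- The predicate on the right respects the generating relation, so it descends to the quotient.
theorem quot_inl_eq_iff (hg : Function.Injective g) {v : V} {s : V ⊕ W} :
    Quot.mk (fun s t => ∃ k, s = .inl (f k) ∧ t = .inr (g k)) (.inl v) = Quot.mk _ s ↔
      Sum.elim (v = ·) (fun w => ∃ k, f k = v ∧ g k = w) s := by
  refine ⟨fun h => ?_, ?_⟩
  · refine cast (congrArg (Quot.lift (Sum.elim (v = ·) fun w => ∃ k, f k = v ∧ g k = w) ?_) h) rfl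
    rintro _ _ ⟨k, rfl, rfl⟩
    simp [hg.eq_iff, eq_comm]
  · rcases s with v | w
    · rintro rfl
      rfl
    · rintro ⟨k, rfl, rfl⟩
      exact Quot.sound ⟨k, rfl, rfl⟩

theorem quot_inr_injective (hf : Function.Injective f) :
    Function.Injective fun w : W =>
      Quot.mk (fun s t => ∃ k, s = .inl (f k) ∧ t = .inr (g k)) (.inr w : V ⊕ W) := by
  intro w w' h
  refine cast (congrArg (Quot.lift (Sum.elim (fun v => ∃ k, f k = v ∧ g k = w) (w = ·)) ?_) h) rfl
  rintro _ _ ⟨k, rfl, rfl⟩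
  simp [hf.eq_iff, eq_comm]

end QuotSum

/-- `C` is obtained by gluing `A` and `B` along their common interface, both carriers being
embedded in the carrier of `C`.  For cospans with injective legs this characterises `A.comp B` up
to isomorphism without reference to quotients. -/
structure Gluing {S : MonSig} {X Y Z : Type} (A : LCospan S X Y) (B : LCospan S Y Z)
    (C : LCospan S X Z) where
  left : LHom A.G C.G
  right : LHom B.G C.G
  edge_bijective : Function.Bijective (Sum.elim left.edgeMap right.edgeMap)
  left_injective : Function.Injective left.nodeMap
  right_injective : Function.Injective right.nodeMap
  cover : ∀ u, (∃ v, left.nodeMap v = u) ∨ ∃ w, right.nodeMap w = u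
  overlap : ∀ v w, left.nodeMap v = right.nodeMap w ↔ ∃ y, A.out y = v ∧ B.inp y = w
  inp_eq : ∀ x, left.nodeMap (A.inp x) = C.inp x
  out_eq : ∀ z, right.nodeMap (B.out z) = C.out z

namespace Gluing

variable {S : MonSig} {X Y Z X' Y' Z' : Type} {A A' : LCospan S X Y} {B B' : LCospan S Y Z}
  {C : LCospan S X Z}

/-- The pushout composite is a gluing. -/
def ofComp (hA : Function.Injective A.out) (hB : Function.Injective B.inp) :
    Gluing A B (A.comp B) where
  left := LHom.compInl A B
  right := LHom.compInr A B
  edge_bijective := Sum.elim_inl_inr (α := A.G.E) (β := B.G.E) ▸ Function.bijective_id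
  left_injective _ _ := (quot_inl_eq_iff hB).1
  right_injective := quot_inr_injective hA
  cover := by
    rintro ⟨v | w⟩
    exacts [.inl ⟨v, rfl⟩, .inr ⟨w, rfl⟩]
  overlap _ _ := quot_inl_eq_iff hB
  inp_eq _ := rfl
  out_eq _ := rfl

/-- The bijection between the hyperedges of the parts and those of the gluing. -/
noncomputable def edgeEquiv (γ : Gluing A B C) : A.G.E ⊕ B.G.E ≃ C.G.E :=
  .ofBijective _ γ.edge_bijective

theorem src_edgeEquiv (γ : Gluing A B C) (e : A.G.E ⊕ B.G.E) :
    C.G.src (γ.edgeEquiv e) = Sum.elim (fun e => (A.G.src e).map γ.left.nodeMap)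
      (fun e => (B.G.src e).map γ.right.nodeMap) e := by
  rcases e with e | e
  exacts [γ.left.src_eq e, γ.right.src_eq e]

theorem tgt_edgeEquiv (γ : Gluing A B C) (e : A.G.E ⊕ B.G.E) :
    C.G.tgt (γ.edgeEquiv e) = Sum.elim (fun e => (A.G.tgt e).map γ.left.nodeMap)
      (fun e => (B.G.tgt e).map γ.right.nodeMap) e := by
  rcases e with e | e
  exacts [γ.left.tgt_eq e, γ.right.tgt_eq e]

/-- The comparison map from the pushout to a gluing. -/
def desc (γ : Gluing A B C) : LHom (A.comp B).G C.G :=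
  LHom.compDesc γ.left γ.right fun y => (γ.overlap _ _).2 ⟨y, rfl, rfl⟩

theorem desc_bijective (γ : Gluing A B C) : Function.Bijective γ.desc.nodeMap := by
  have glued {v w} (h : γ.left.nodeMap v = γ.right.nodeMap w) :
      (Quot.mk _ (.inl v) : (A.comp B).G.V) = Quot.mk _ (.inr w) := by
    obtain ⟨y, rfl, rfl⟩ := (γ.overlap v w).1 h
    exact Quot.sound ⟨y, rfl, rfl⟩
  constructor
  · rintro ⟨v | w⟩ ⟨v' | w'⟩ h
    · exact congrArg (fun v => Quot.mk _ (Sum.inl v)) (γ.left_injective h)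
    · exact glued h
    · exact (glued h.symm).symm
    · exact congrArg (fun w => Quot.mk _ (Sum.inr w)) (γ.right_injective h)
  · intro u
    obtain ⟨v, rfl⟩ | ⟨w, rfl⟩ := γ.cover u
    exacts [⟨Quot.mk _ (.inl v), rfl⟩, ⟨Quot.mk _ (.inr w), rfl⟩]

/-- Any gluing is isomorphic to the pushout composite. -/
noncomputable def compIso (γ : Gluing A B C) : LCospanIso (A.comp B) C where
  nodeEquiv := .ofBijective _ γ.desc_bijective
  edgeEquiv := γ.edgeEquiv
  src_eq := γ.desc.src_eq
  tgt_eq := γ.desc.tgt_eq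
  label_eq := γ.desc.label_eq
  inp_eq := γ.inp_eq
  out_eq := γ.out_eq

/-- Replacing the parts of a gluing by isomorphic ones. -/
def congr (γ : Gluing A B C) (i : LCospanIso A' A) (j : LCospanIso B' B) : Gluing A' B' C where
  left := i.toLHom.comp γ.left
  right := j.toLHom.comp γ.right
  edge_bijective := by
    have := γ.edge_bijective.comp (i.edgeEquiv.bijective.sumMap j.edgeEquiv.bijective)
    rwa [Sum.elim_comp_map] at this
  left_injective := γ.left_injective.comp i.nodeEquiv.injective
  right_injective := γ.right_injective.comp j.nodeEquiv.injective
  cover u := (γ.cover u).imp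
    (fun ⟨v, hv⟩ => ⟨i.nodeEquiv.symm v, (congrArg _ (i.nodeEquiv.apply_symm_apply v)).trans hv⟩)
    (fun ⟨w, hw⟩ => ⟨j.nodeEquiv.symm w, (congrArg _ (j.nodeEquiv.apply_symm_apply w)).trans hw⟩)
  overlap v w := (γ.overlap _ _).trans <| exists_congr fun y => by
    rw [← i.out_eq, ← j.inp_eq]
    exact and_congr i.nodeEquiv.apply_eq_iff_eq j.nodeEquiv.apply_eq_iff_eq
  inp_eq x := (congrArg _ (i.inp_eq x)).trans (γ.inp_eq x)
  out_eq z := (congrArg _ (j.out_eq z)).trans (γ.out_eq z)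

/-- Reindexing the outer interfaces along functions and the inner one along a bijection. -/
def reind (γ : Gluing A B C) (f : X' → X) (g : Y' ≃ Y) (h : Z' → Z) :
    Gluing (A.reind f g) (B.reind g h) (C.reind f h) where
  left := γ.left
  right := γ.right
  edge_bijective := γ.edge_bijective
  left_injective := γ.left_injective
  right_injective := γ.right_injective
  cover := γ.cover
  overlap v w := (γ.overlap v w).trans
    (g.surjective.exists (p := fun y => A.out y = v ∧ B.inp y = w))
  inp_eq x := γ.inp_eq (f x)
  out_eq z := γ.out_eq (h z)

end Gluing

/-! ### Closure properties of monogamous acyclic cospans -/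

namespace MonAcyclic

variable {S : MonSig} {X Y Z X' Y' : Type} {A A' : LCospan S X Y} {B : LCospan S Y Z}
  {C : LCospan S X Z}

theorem exactCover_inp (hA : MonAcyclic A) : ExactCover A.inp A.G.tgt :=
  (LCospan.monogamous_iff.1 hA.1).1

theorem exactCover_out (hA : MonAcyclic A) : ExactCover A.out A.G.src :=
  (LCospan.monogamous_iff.1 hA.1).2

theorem of_iso (hA : MonAcyclic A) (i : LCospanIso A' A) : MonAcyclic A' :=
  ⟨LCospan.monogamous_iff.2
    ⟨hA.exactCover_inp.of_equiv (.refl X) i.edgeEquiv i.nodeEquiv i.inp_eq i.tgt_eq,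
    hA.exactCover_out.of_equiv (.refl Y) i.edgeEquiv i.nodeEquiv i.out_eq i.src_eq⟩,
  hA.2.comap i.toLHom.toHypHom⟩

theorem reind (hA : MonAcyclic A) (f : X' ≃ X) (g : Y' ≃ Y) : MonAcyclic (A.reind f g) :=
  ⟨LCospan.monogamous_iff.2
    ⟨hA.exactCover_inp.of_equiv f (.refl _) (.refl _) (fun _ => rfl)
      (fun _ => (List.map_id _).symm),
    hA.exactCover_out.of_equiv g (.refl _) (.refl _) (fun _ => rfl)
      (fun _ => (List.map_id _).symm)⟩,
  hA.2⟩

theorem tensor {A' : LCospan S X' Y'} (hA : MonAcyclic A) (hA' : MonAcyclic A') :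
    MonAcyclic (A.tensor A') := by
  refine ⟨LCospan.monogamous_iff.2 ⟨hA.exactCover_inp.sum hA'.exactCover_inp,
    hA.exactCover_out.sum hA'.exactCover_out⟩, Hyp.acyclic_of_sumLex hA.2 hA'.2 id ?_⟩
  rintro (e | e) (e' | e') ⟨v, hv, hv'⟩ <;> obtain ⟨w, hw, rfl⟩ := List.mem_map.1 hv <;>
    obtain ⟨w', hw', hww'⟩ := List.mem_map.1 hv'
  · exact .inl ⟨w, hw, Sum.inl_injective hww' ▸ hw'⟩
  · exact .sep _ _
  · cases hww'
  · exact .inr ⟨w, hw, Sum.inr_injective hww' ▸ hw'⟩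

theorem acyclic_of_gluing (hA : MonAcyclic A) (hB : MonAcyclic B) (γ : Gluing A B C) :
    C.Acyclic := by
  refine Hyp.acyclic_of_sumLex hA.2 hB.2 γ.edgeEquiv.symm fun e e' he => ?_
  obtain ⟨e, rfl⟩ := γ.edgeEquiv.surjective e
  obtain ⟨e', rfl⟩ := γ.edgeEquiv.surjective e'
  obtain ⟨v, hv, hv'⟩ := he
  rw [γ.tgt_edgeEquiv] at hv
  rw [γ.src_edgeEquiv] at hv'
  rw [Equiv.symm_apply_apply, Equiv.symm_apply_apply]
  rcases e with e | e <;> rcases e' with e' | e' <;> obtain ⟨w, hw, rfl⟩ := List.mem_map.1 hv <;>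
    obtain ⟨w', hw', hww'⟩ := List.mem_map.1 hv'
  · exact .inl ⟨w, hw, γ.left_injective hww' ▸ hw'⟩
  · exact .sep _ _
  · obtain ⟨y, -, rfl⟩ := (γ.overlap w' w).1 hww'
    exact (hB.exactCover_inp.notMem y e hw).elim
  · exact .inr ⟨w, hw, γ.right_injective hww' ▸ hw'⟩

theorem of_gluing (hA : MonAcyclic A) (hB : MonAcyclic B) (γ : Gluing A B C) : MonAcyclic C := by
  refine ⟨LCospan.monogamous_iff.2 ⟨?_, ?_⟩, acyclic_of_gluing hA hB γ⟩
  · refine (hA.exactCover_inp.glue hB.exactCover_inp A.out γ.left_injective γ.right_injective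
      γ.cover γ.overlap).of_equiv (.refl X) γ.edgeEquiv.symm (.refl _)
      (fun x => (γ.inp_eq x).symm) fun e => ?_
    simpa using (γ.tgt_edgeEquiv (γ.edgeEquiv.symm e)).symm
  · refine (hB.exactCover_out.glue hA.exactCover_out B.inp γ.right_injective γ.left_injective
      (fun u => (γ.cover u).symm) fun w v => ?_).of_equiv (.refl Z)
      (γ.edgeEquiv.symm.trans (.sumComm _ _)) (.refl _) (fun z => (γ.out_eq z).symm) fun e => ?_
    · rw [eq_comm, γ.overlap]
      simp only [and_comm]
    · obtain ⟨e | e, rfl⟩ := γ.edgeEquiv.surjective e <;> simp [γ.src_edgeEquiv]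

end MonAcyclic

/-! ### Wirings -/

/-- The cospan without hyperedges whose output leg connects `y` to the input `g y`.  Identities,
symmetries and all permutations are of this form. -/
def wiring (S : MonSig) {X Y : Type} (g : Y → X) : LCospan S X Y :=
  ⟨discreteLHyp S X, id, g⟩

section Wiring

variable {S : MonSig} {X Y Z X' : Type}

instance (g : Y → X) : IsEmpty (wiring S g).G.E :=
  inferInstanceAs (IsEmpty Empty)

theorem monAcyclic_wiring (σ : Y ≃ X) : MonAcyclic (wiring S σ) :=
  ⟨LCospan.monogamous_iff.2 ⟨exactCover_iff_bijective.2 Function.bijective_id,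
    exactCover_iff_bijective.2 σ.bijective⟩,
  Hyp.acyclic_of_forall_not_successor (fun h => isEmptyElim h)⟩

/-- Composing with a wiring reindexes the outputs. -/
def Gluing.wiringRight {A : LCospan S X Y} (hA : Function.Injective A.out) (g : Z → Y) :
    Gluing A (wiring S g) (A.reind id g) where
  left := (LCospanIso.refl A).toLHom
  right := discreteHom A.G A.out
  edge_bijective := by
    refine ⟨?_, fun e => ⟨.inl e, rfl⟩⟩
    rintro (e | ⟨⟨⟩⟩) (e' | ⟨⟨⟩⟩) h
    exact congrArg Sum.inl h
  left_injective := Function.injective_id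
  right_injective := hA
  cover u := .inl ⟨u, rfl⟩
  overlap _ w := ⟨fun h => ⟨w, h.symm, rfl⟩, fun ⟨_, hy, hw⟩ => hw ▸ hy.symm⟩
  inp_eq _ := rfl
  out_eq _ := rfl

/-- Composing a bijective wiring with a cospan reindexes the inputs. -/
def Gluing.wiringLeft {A : LCospan S X Y} (hA : Function.Injective A.inp) (f : X' ≃ X) :
    Gluing (wiring S f.symm) A (A.reind f id) where
  left := discreteHom A.G (A.inp ∘ f)
  right := (LCospanIso.refl A).toLHom
  edge_bijective := by
    refine ⟨?_, fun e => ⟨.inr e, rfl⟩⟩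
    rintro (⟨⟨⟩⟩ | e) (⟨⟨⟩⟩ | e') h
    exact congrArg Sum.inr h
  left_injective := hA.comp f.injective
  right_injective := Function.injective_id
  cover u := .inr ⟨u, rfl⟩
  overlap v _ := ⟨fun h => ⟨f v, f.symm_apply_apply v, h⟩, by
    rintro ⟨x, rfl, rfl⟩
    exact congrArg A.inp (f.apply_symm_apply x)⟩
  inp_eq _ := rfl
  out_eq _ := rfl

end Wiring

/-! ### Interpretations -/

section Interp

variable {S : MonSig} {n m k n' m' : ℕ}

theorem monAcyclic_genCospan (o : S.ops) : MonAcyclic (genCospan o) := by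
  refine ⟨LCospan.monogamous_iff.2 ⟨exactCover_inl_finRange _ _,
    (exactCover_inl_finRange _ _).of_equiv (.refl _) (.refl _) (.sumComm _ _) (fun _ => rfl)
      (fun _ => (List.map_map (f := Sum.inl) (g := Sum.swap)).symm)⟩,
    Hyp.acyclic_of_forall_not_successor fun _ _ ⟨v, hv, hv'⟩ => ?_⟩
  obtain ⟨i, -, rfl⟩ := List.mem_map.1 hv
  obtain ⟨_, -, h⟩ := List.mem_map.1 hv'
  cases h

theorem monAcyclic_interp : ∀ {n m : ℕ} (t : Term S n m), MonAcyclic (interp t)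
  | _, _, .op o => monAcyclic_genCospan o
  | _, _, .id n => monAcyclic_wiring (Equiv.refl (Fin n))
  | _, _, .symm _ _ => monAcyclic_wiring finAddFlip
  | _, _, .seq t u =>
    have ht := monAcyclic_interp t
    have hu := monAcyclic_interp u
    ht.of_gluing hu (.ofComp ht.exactCover_out.injective hu.exactCover_inp.injective)
  | _, _, .par t u => ((monAcyclic_interp t).tensor (monAcyclic_interp u)).reind _ _

theorem finite_edges_interp : ∀ {n m : ℕ} (t : Term S n m), Finite (interp t).G.E
  | _, _, .op _ => inferInstanceAs (Finite Unit)
  | _, _, .id _ | _, _, .symm _ _ => inferInstanceAs (Finite Empty)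
  | _, _, .seq t u | _, _, .par t u =>
    have := finite_edges_interp t
    have := finite_edges_interp u
    inferInstanceAs (Finite ((interp t).G.E ⊕ (interp u).G.E))

/-- `A` is isomorphic to the interpretation of a term. -/
def IsInterp (A : LCospan S (Fin n) (Fin m)) : Prop :=
  ∃ t : Term S n m, Nonempty (LCospanIso A (interp t))

namespace IsInterp

variable {A : LCospan S (Fin n) (Fin m)}

theorem of_iso {A' : LCospan S (Fin n) (Fin m)} (hA : IsInterp A) (i : LCospanIso A' A) :
    IsInterp A' :=
  have ⟨t, ⟨j⟩⟩ := hA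
  ⟨t, ⟨i.trans j⟩⟩

theorem monAcyclic (hA : IsInterp A) : MonAcyclic A :=
  have ⟨t, ⟨i⟩⟩ := hA
  (monAcyclic_interp t).of_iso i

theorem finite_edges (hA : IsInterp A) : Finite A.G.E :=
  have ⟨t, ⟨i⟩⟩ := hA
  have := finite_edges_interp t
  .of_equiv _ i.edgeEquiv.symm

theorem of_gluing {B : LCospan S (Fin m) (Fin k)} {C : LCospan S (Fin n) (Fin k)}
    (hA : IsInterp A) (hB : IsInterp B) (γ : Gluing A B C) : IsInterp C :=
  have ⟨t, ⟨i⟩⟩ := hA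
  have ⟨u, ⟨j⟩⟩ := hB
  ⟨t.seq u, ⟨(γ.congr i.symm j.symm).compIso.symm⟩⟩

theorem tensor {B : LCospan S (Fin n') (Fin m')} (hA : IsInterp A) (hB : IsInterp B) :
    IsInterp ((A.tensor B).reind finSumFinEquiv.symm finSumFinEquiv.symm) :=
  have ⟨t, ⟨i⟩⟩ := hA
  have ⟨u, ⟨j⟩⟩ := hB
  ⟨t.par u, ⟨(i.tensor j).reind _ _⟩⟩

theorem reind_right (hA : IsInterp A) {g : Fin k → Fin m} (hg : IsInterp (wiring S g)) :
    IsInterp (A.reind id g) :=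
  hA.of_gluing hg (.wiringRight hA.monAcyclic.exactCover_out.injective g)

theorem reind_left (hA : IsInterp A) {f : Fin k ≃ Fin n} (hf : IsInterp (wiring S f.symm)) :
    IsInterp (A.reind f id) :=
  hf.of_gluing hA (.wiringLeft hA.monAcyclic.exactCover_inp.injective f)

theorem wiring_sumCongr {σ : Equiv.Perm (Fin n)} {τ : Equiv.Perm (Fin m)}
    (hσ : IsInterp (wiring S σ)) (hτ : IsInterp (wiring S τ)) :
    IsInterp (wiring S (finSumFinEquiv.permCongr (σ.sumCongr τ))) := by
  refine (hσ.tensor hτ).of_iso (.ofIsEmpty finSumFinEquiv.symm (fun x => ?_) (fun y => ?_))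
  · change finSumFinEquiv.symm x = Sum.elim _ _ (finSumFinEquiv.symm x)
    rcases finSumFinEquiv.symm x with x | x <;> rfl
  · change finSumFinEquiv.symm (finSumFinEquiv (σ.sumCongr τ (finSumFinEquiv.symm y))) =
      Sum.elim _ _ (finSumFinEquiv.symm y)
    rw [Equiv.symm_apply_apply]
    rcases finSumFinEquiv.symm y with y | y <;> rfl

theorem wiring_one (n : ℕ) : IsInterp (wiring S (1 : Equiv.Perm (Fin n))) :=
  ⟨.id n, ⟨.refl _⟩⟩

theorem wiring_swap_zero_one : IsInterp (wiring S (Equiv.swap 0 1 : Equiv.Perm (Fin 2))) := by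
  have : (finAddFlip : Fin (1 + 1) ≃ Fin (1 + 1)) = Equiv.swap 0 1 := by decide
  exact ⟨.symm 1 1, ⟨this ▸ .refl _⟩⟩

theorem wiring_swap_castSucc_succ : ∀ {n : ℕ} (i : Fin n),
    IsInterp (wiring S (Equiv.swap i.castSucc i.succ))
  | n + 1, i => by
    induction i using Fin.lastCases with
    | last =>
      convert wiring_sumCongr (wiring_one n) wiring_swap_zero_one using 2
      rw [Equiv.Perm.sumCongr_one_swap, Equiv.permCongr_def, Equiv.symm_trans_swap_trans]
      rfl
    | cast j =>
      have ih : IsInterp (wiring S (Equiv.swap j.castSucc j.succ)) := wiring_swap_castSucc_succ j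
      convert ih.wiring_sumCongr (wiring_one 1) using 2
      rw [Equiv.Perm.sumCongr_swap_one, Equiv.permCongr_def, Equiv.symm_trans_swap_trans]
      rfl

theorem wiring_perm (σ : Equiv.Perm (Fin n)) : IsInterp (wiring S σ) := by
  cases n with
  | zero => exact Subsingleton.elim 1 σ ▸ wiring_one 0
  | succ n =>
    have hσ : σ ∈ Submonoid.closure
        (Set.range fun i : Fin n => Equiv.swap i.castSucc i.succ) := by
      rw [Equiv.Perm.mclosure_swap_castSucc_succ]
      exact Submonoid.mem_top σ
    induction hσ using Submonoid.closure_induction with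
    | mem _ h =>
      obtain ⟨i, rfl⟩ := h
      exact wiring_swap_castSucc_succ i
    | one => exact wiring_one _
    | mul _ _ _ _ h h' => exact h.reind_right h'

end IsInterp
end Interp

/-! ### Splitting off an initial hyperedge -/

theorem exists_equiv_of_range_eq {X Y V : Type*} {f : X → V} {g : Y → V}
    (hf : Function.Injective f) (hg : Function.Injective g) (h : Set.range f = Set.range g) :
    ∃ α : X ≃ Y, ∀ x, g (α x) = f x :=
  ⟨(Equiv.ofInjective f hf).trans ((Equiv.setCongr h).trans (Equiv.ofInjective g hg).symm),
    fun _ => Equiv.apply_ofInjective_symm hg _⟩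

namespace LHyp

variable {S : MonSig} (G : LHyp S) (e : G.E)

/-- The ordered sources of a hyperedge, indexed by the arity of its label. -/
def source (i : Fin (S.ar (G.label e))) : G.V := (G.src e).get (i.cast (G.src_len e).symm)

/-- The ordered targets of a hyperedge, indexed by the coarity of its label. -/
def target (i : Fin (S.coar (G.label e))) : G.V := (G.tgt e).get (i.cast (G.tgt_len e).symm)

theorem map_source_finRange : (List.finRange _).map (G.source e) = G.src e :=
  List.ext_getElem (by simp [G.src_len]) fun _ _ _ => by simp [source]

theorem map_target_finRange : (List.finRange _).map (G.target e) = G.tgt e :=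
  List.ext_getElem (by simp [G.tgt_len]) fun _ _ _ => by simp [target]

variable {G e}

theorem mem_src_iff {v : G.V} : v ∈ G.src e ↔ ∃ i, G.source e i = v := by
  rw [← map_source_finRange, List.mem_map]
  simp only [List.mem_finRange, true_and]

theorem mem_tgt_iff {v : G.V} : v ∈ G.tgt e ↔ ∃ i, G.target e i = v := by
  rw [← map_target_finRange, List.mem_map]
  simp only [List.mem_finRange, true_and]

theorem source_injective (h : (G.src e).Nodup) : Function.Injective (G.source e) :=
  h.injective_get.comp (Fin.cast_injective _)

theorem target_injective (h : (G.tgt e).Nodup) : Function.Injective (G.target e) :=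
  h.injective_get.comp (Fin.cast_injective _)

variable (G e)

/-- The homomorphism picking out a hyperedge together with its sources and targets. -/
def edgeHom : LHom (genCospan (G.label e)).G G where
  nodeMap := Sum.elim (G.source e) (G.target e)
  edgeMap _ := e
  src_eq _ := by simp [genCospan, Function.comp_def, map_source_finRange]
  tgt_eq _ := by simp [genCospan, Function.comp_def, map_target_finRange]
  label_eq _ := rfl

end LHyp

namespace SubHyp

variable {S : MonSig} {G : LHyp S} (H : SubHyp G.toHyp)

/-- A subhypergraph with the labelling of the ambient hypergraph. -/
def toLHyp : LHyp S where
  toHyp := H.toHyp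
  label e := G.label e.1
  src_len e := List.length_pmap.trans (G.src_len e.1)
  tgt_len e := List.length_pmap.trans (G.tgt_len e.1)

/-- The inclusion of a subhypergraph. -/
def inclusion : LHom H.toLHyp G where
  nodeMap := Subtype.val
  edgeMap := Subtype.val
  src_eq e := by simp [toLHyp, SubHyp.toHyp, List.map_pmap]
  tgt_eq e := by simp [toLHyp, SubHyp.toHyp, List.map_pmap]
  label_eq _ := rfl

end SubHyp

section Initial

variable {S : MonSig} {X Y : Type} {c : LCospan S X Y} {e : c.G.E}

theorem MonAcyclic.exists_inp_eq_of_mem_src (hc : MonAcyclic c) (he : c.G.IsInitial e)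
    {v : c.G.V} (hv : v ∈ c.G.src e) : ∃ x, c.inp x = v :=
  (hc.exactCover_inp.exists_or v).resolve_right fun ⟨h, hh⟩ => he h ⟨v, hh, hv⟩

/-- What remains of a hypergraph after deleting an initial hyperedge and its sources. -/
def removeInitial (hc : MonAcyclic c) (he : c.G.IsInitial e) : SubHyp c.G.toHyp where
  nodes := {v | v ∉ c.G.src e}
  edges := {h | h ≠ e}
  src_mem _ hh _ hv hv' := hh (hc.exactCover_out.eq_of_mem hv hv')
  tgt_mem h _ v hv hv' := he h ⟨v, hv, hv'⟩

/-- The cospan that remains after deleting an initial hyperedge `e` and its sources: the targets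
of `e` become inputs, next to those inputs that are not sources of `e`. -/
def residual (hc : MonAcyclic c) (he : c.G.IsInitial e) :
    LCospan S (Fin (S.coar (c.G.label e)) ⊕ {x // c.inp x ∉ c.G.src e}) Y where
  G := (removeInitial hc he).toLHyp
  inp := Sum.elim
    (fun i => ⟨c.G.target e i, fun hi => he e ⟨_, LHyp.mem_tgt_iff.2 ⟨i, rfl⟩, hi⟩⟩)
    (fun x => ⟨c.inp x, x.2⟩)
  out y := ⟨c.out y, hc.exactCover_out.notMem y e⟩

theorem monAcyclic_residual (hc : MonAcyclic c) (he : c.G.IsInitial e) :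
    MonAcyclic (residual hc he) := by
  have hinp := hc.exactCover_inp
  have hout := hc.exactCover_out
  let ι := (removeInitial hc he).inclusion
  refine ⟨LCospan.monogamous_iff.2
    ⟨hinp.comap (ι := ι.nodeMap) (η := ι.edgeMap) Subtype.val_injective Subtype.val_injective
      ι.tgt_eq ?_ ?_ ?_,
    hout.comap (ι := ι.nodeMap) (η := ι.edgeMap) Subtype.val_injective Subtype.val_injective
      ι.src_eq ?_ ?_ ?_⟩, hc.2.comap ι.toHypHom⟩
  · refine .of_comp (f := ι.nodeMap) ?_
    rintro (i | x) (i' | x') h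
    · exact congrArg Sum.inl (LHyp.target_injective (hinp.nodup e) h)
    · exact (hinp.notMem x' e (LHyp.mem_tgt_iff.2 ⟨i, h⟩)).elim
    · exact (hinp.notMem x e (LHyp.mem_tgt_iff.2 ⟨i', h.symm⟩)).elim
    · exact congrArg Sum.inr (Subtype.ext (hinp.injective h))
  · rintro (i | x) h hv
    · exact h.2 (hinp.eq_of_mem hv (LHyp.mem_tgt_iff.2 ⟨i, rfl⟩))
    · exact hinp.notMem x.1 h.1 hv
  · intro v
    obtain ⟨x, hx⟩ | ⟨h, hv⟩ := hinp.exists_or v.1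
    · exact .inl ⟨.inr ⟨x, hx ▸ v.2⟩, Subtype.ext hx⟩
    · rcases eq_or_ne h e with rfl | hne
      · obtain ⟨i, hi⟩ := LHyp.mem_tgt_iff.1 hv
        exact .inl ⟨.inl i, Subtype.ext hi⟩
      · exact .inr ⟨⟨h, hne⟩, hv⟩
  · exact fun y y' h => hout.injective (congrArg Subtype.val h)
  · exact fun y h => hout.notMem y h.1
  · intro v
    obtain ⟨y, hy⟩ | ⟨h, hv⟩ := hout.exists_or v.1
    · exact .inl ⟨y, Subtype.ext hy⟩
    · exact .inr ⟨⟨h, fun hh => v.2 (hh ▸ hv)⟩, hv⟩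

/-- The cospan consisting of the hyperedge `e` and of wires for the inputs of `c` that are not
sources of `e`. -/
def initialPart (c : LCospan S X Y) (e : c.G.E) :
    LCospan S (Fin (S.ar (c.G.label e)) ⊕ {x // c.inp x ∉ c.G.src e})
      (Fin (S.coar (c.G.label e)) ⊕ {x // c.inp x ∉ c.G.src e}) :=
  (genCospan (c.G.label e)).tensor (wiring S id)

/-- The homomorphism from the initial part into the whole carrier. -/
def initialHom (c : LCospan S X Y) (e : c.G.E) : LHom (initialPart c e).G c.G :=
  .copair (c.G.edgeHom e) (discreteHom c.G fun x => c.inp x.1)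

theorem initialHom_injective (hc : MonAcyclic c) (he : c.G.IsInitial e) :
    Function.Injective (initialHom c e).nodeMap := by
  have hinp := hc.exactCover_inp
  refine Function.Injective.sumElim (Function.Injective.sumElim
    (LHyp.source_injective (hc.exactCover_out.nodup e)) (LHyp.target_injective (hinp.nodup e)) ?_)
    (hinp.injective.comp Subtype.val_injective) ?_
  · exact fun i j h => he e ⟨_, LHyp.mem_tgt_iff.2 ⟨j, rfl⟩, LHyp.mem_src_iff.2 ⟨i, h⟩⟩
  · rintro (i | j) x h
    · exact x.2 (LHyp.mem_src_iff.2 ⟨i, h⟩)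
    · exact hinp.notMem x.1 e (LHyp.mem_tgt_iff.2 ⟨j, h⟩)

theorem exists_equiv_initialHom_inp (hc : MonAcyclic c) (he : c.G.IsInitial e) :
    ∃ α : X ≃ Fin (S.ar (c.G.label e)) ⊕ {x // c.inp x ∉ c.G.src e},
      ∀ x, (initialHom c e).nodeMap ((initialPart c e).inp (α x)) = c.inp x := by
  refine exists_equiv_of_range_eq hc.exactCover_inp.injective
    ((initialHom_injective hc he).comp (Sum.map_injective.2
      ⟨Sum.inl_injective, Function.injective_id⟩)) (Set.ext fun v => ⟨?_, ?_⟩)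
  · rintro ⟨x, rfl⟩
    by_cases hx : c.inp x ∈ c.G.src e
    · obtain ⟨i, hi⟩ := LHyp.mem_src_iff.1 hx
      exact ⟨.inl i, hi⟩
    · exact ⟨.inr ⟨x, hx⟩, rfl⟩
  · rintro ⟨i | x, rfl⟩
    · exact hc.exists_inp_eq_of_mem_src he (LHyp.mem_src_iff.2 ⟨i, rfl⟩)
    · exact ⟨x.1, rfl⟩

/-- A cospan is glued from an initial hyperedge and the residual cospan. -/
def Gluing.ofInitial (hc : MonAcyclic c) (he : c.G.IsInitial e)
    (α : X ≃ Fin (S.ar (c.G.label e)) ⊕ {x // c.inp x ∉ c.G.src e})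
    (hα : ∀ x, (initialHom c e).nodeMap ((initialPart c e).inp (α x)) = c.inp x) :
    Gluing ((initialPart c e).reind α id) (residual hc he) c where
  left := initialHom c e
  right := (removeInitial hc he).inclusion
  edge_bijective := by
    constructor
    · rintro ((_ | ⟨⟨⟩⟩) | h) ((_ | ⟨⟨⟩⟩) | h') hh
      · rfl
      · exact (h'.2 hh.symm).elim
      · exact (h.2 hh).elim
      · exact congrArg Sum.inr (Subtype.ext hh)
    · intro h
      rcases eq_or_ne h e with rfl | hne
      exacts [⟨.inl (.inl ()), rfl⟩, ⟨.inr ⟨h, hne⟩, rfl⟩]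
  left_injective := initialHom_injective hc he
  right_injective := Subtype.val_injective
  cover u := by
    by_cases hu : u ∈ c.G.src e
    · obtain ⟨i, hi⟩ := LHyp.mem_src_iff.1 hu
      exact .inl ⟨.inl (.inl i), hi⟩
    · exact .inr ⟨⟨u, hu⟩, rfl⟩
  overlap v w := by
    refine ⟨fun h => ?_, ?_⟩
    · obtain (i | j) | x := v
      · exact (w.2 (LHyp.mem_src_iff.2 ⟨i, h⟩)).elim
      · exact ⟨.inl j, rfl, Subtype.ext h⟩
      · exact ⟨.inr x, rfl, Subtype.ext h⟩
    · rintro ⟨j | x, rfl, rfl⟩ <;> rfl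
  inp_eq := hα
  out_eq _ := rfl

end Initial

/-! ### Realizable cospans -/

/-- `A` is, for some enumerations of its interfaces, isomorphic to the interpretation of a term. -/
def Realizable {S : MonSig} {X Y : Type} (A : LCospan S X Y) : Prop :=
  ∃ (n m : ℕ) (f : Fin n ≃ X) (g : Fin m ≃ Y), IsInterp (A.reind f g)

namespace Realizable

variable {S : MonSig} {X Y Z X' Y' : Type} {A : LCospan S X Y}

theorem isInterp (hA : Realizable A) {n m : ℕ} (f : Fin n ≃ X) (g : Fin m ≃ Y) :
    IsInterp (A.reind f g) := by
  obtain ⟨n', m', f', g', h⟩ := hA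
  obtain rfl : n' = n := Fin.equiv_iff_eq.1 ⟨f'.trans f.symm⟩
  obtain rfl : m' = m := Fin.equiv_iff_eq.1 ⟨g'.trans g.symm⟩
  simpa [LCospan.reind, Function.comp_def] using
    (h.reind_left (f := f.trans f'.symm) (.wiring_perm _)).reind_right
      (.wiring_perm (g.trans g'.symm))

theorem of_gluing {B : LCospan S Y Z} {C : LCospan S X Z} (hA : Realizable A)
    (hB : Realizable B) (γ : Gluing A B C) : Realizable C :=
  have ⟨n, _, f, g, hAfg⟩ := hA
  have ⟨_, k, _, h, _⟩ := hB
  ⟨n, k, f, h, hAfg.of_gluing (hB.isInterp g h) (γ.reind f g h)⟩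

theorem reind (hA : Realizable A) (f : X' ≃ X) (g : Y' ≃ Y) : Realizable (A.reind f g) := by
  obtain ⟨n, m, f', g', h⟩ := hA
  refine ⟨n, m, f'.trans f.symm, g'.trans g.symm, ?_⟩
  simpa [LCospan.reind, Function.comp_def] using h

theorem genCospan (o : S.ops) : Realizable (genCospan o) :=
  ⟨_, _, .refl _, .refl _, .op o, ⟨.refl _⟩⟩

theorem tensor {B : LCospan S X' Y'} (hA : Realizable A) (hB : Realizable B) :
    Realizable (A.tensor B) := by
  obtain ⟨n, m, f, g, hA⟩ := hA
  obtain ⟨n', m', f', g', hB⟩ := hB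
  refine ⟨n + n', m + m', finSumFinEquiv.symm.trans (f.sumCongr f'),
    finSumFinEquiv.symm.trans (g.sumCongr g'), (hA.tensor hB).of_iso ⟨.refl _, .refl _,
      fun _ => (List.map_id _).symm, fun _ => (List.map_id _).symm, fun _ => rfl, fun x => ?_,
      fun y => ?_⟩⟩
  · change Sum.elim _ _ (f.sumCongr f' (finSumFinEquiv.symm x)) =
      Sum.elim _ _ (finSumFinEquiv.symm x)
    rcases finSumFinEquiv.symm x with x | x <;> rfl
  · change Sum.elim _ _ (g.sumCongr g' (finSumFinEquiv.symm y)) =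
      Sum.elim _ _ (finSumFinEquiv.symm y)
    rcases finSumFinEquiv.symm y with y | y <;> rfl

theorem of_isEmpty [Finite X] [IsEmpty A.G.E] (hi : Function.Bijective A.inp)
    (ho : Function.Bijective A.out) : Realizable A := by
  obtain ⟨n, ⟨f⟩⟩ := Finite.exists_equiv_fin X
  let p : X ≃ A.G.V := .ofBijective _ hi
  let q : Y ≃ A.G.V := .ofBijective _ ho
  refine ⟨n, n, f.symm, f.symm.trans (p.trans q.symm), (IsInterp.wiring_one n).of_iso
    (.ofIsEmpty (p.symm.trans f) (fun x => ?_) (fun y => ?_))⟩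
  · exact (congrArg f (p.symm_apply_apply _)).trans (f.apply_symm_apply x)
  · exact (congrArg (fun v => f (p.symm v)) (q.apply_symm_apply _)).trans
      ((congrArg f (p.symm_apply_apply _)).trans (f.apply_symm_apply y))

end Realizable

theorem MonAcyclic.realizable {S : MonSig} {X Y : Type} [Finite X] {c : LCospan S X Y}
    [Finite c.G.E] (hc : MonAcyclic c) : Realizable c := by
  induction hk : Nat.card c.G.E using Nat.strong_induction_on generalizing X c with
  | _ k ih =>
  rcases isEmpty_or_nonempty c.G.E with _ | _
  · exact .of_isEmpty (exactCover_iff_bijective.1 hc.exactCover_inp)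
      (exactCover_iff_bijective.1 hc.exactCover_out)
  · obtain ⟨e, he⟩ := Hyp.Acyclic.exists_isInitial hc.2
    obtain ⟨α, hα⟩ := exists_equiv_initialHom_inp hc he
    have : Finite (residual hc he).G.E := inferInstanceAs (Finite {h // h ≠ e})
    have fewer_edges : Nat.card (residual hc he).G.E < k :=
      hk ▸ Finite.card_subtype_lt (p := (· ≠ e)) (x := e) (not_not_intro rfl)
    have initial_realizable : Realizable (initialPart c e) :=
      (Realizable.genCospan _).tensor (.of_isEmpty Function.bijective_id Function.bijective_id)
    exact (initial_realizable.reind α (.refl _)).of_gluing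
      (ih _ fewer_edges (monAcyclic_residual hc he) rfl) (.ofInitial hc he α hα)

theorem characterisation_of_image_general {S : MonSig} {n m : ℕ}
    (c : LCospan S (Fin n) (Fin m)) :
    (∃ t : Term S n m, Nonempty (LCospanIso c (interp t))) ↔
      Finite c.G.E ∧ c.Monogamous ∧ c.Acyclic :=
  ⟨fun h => ⟨IsInterp.finite_edges h, IsInterp.monAcyclic h⟩,
    fun ⟨_, hc⟩ => (MonAcyclic.realizable hc).isInterp (.refl _) (.refl _)⟩

/-- **Characterisation of the image of the interpretation.** A cospan
`n → G ← m` of `Σ`-labelled hypergraphs with finite carrier is isomorphic to the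
interpretation `⟦t⟧` of some `Σ`-term `t : n → m` if and only if it is monogamous
and acyclic. -/
theorem characterisation_of_image {S : MonSig} {n m : ℕ} (c : LCospan S (Fin n) (Fin m))
    (hV : Finite c.G.V) (hE : Finite c.G.E) :
    (∃ t : Term S n m, Nonempty (LCospanIso c (interp t))) ↔
      (c.Monogamous ∧ c.Acyclic) := by
  rw [characterisation_of_image_general]
  exact and_iff_right hE

end SDRT
end
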